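/- arXiv:2402.05017 — 8 statements merged into one kernel-verified Lean document; each statement's English description precedes it below -/
import Mathlib

section
/- If a nonnegative sequence (a_k)_{k=0}^∞ is a TP_∞-preserver, then for every c > 0 with c ≠ 1, the sequence ( ((c^{k} − 1)/(c − 1)) · a_k )_{k=0}^∞ (the coefficient sequence of (A(z) − A(cz))/(1 − c), where A(z) = ∑ a_k z^k) is a totally positive sequence. -/
/-- A real sequence `(a_k)` is totally positive (TP_∞) if all finite minors of the
infinite Toeplitz matrix `(a_{j-i})` (with `a_k = 0` for `k < 0`) are nonnegative. -/
def IsTotallyPositive (a : ℕ → ℝ) : Prop :=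
  ∀ (n : ℕ) (i j : Fin n → ℕ), StrictMono i → StrictMono j →
    0 ≤ (Matrix.of fun p q : Fin n => if i p ≤ j q then a (j q - i p) else 0).det

/-- A real sequence is `m`-times positive (TP_m) if all such minors of order at most `m`
are nonnegative. -/
def IsMultiplyPositive (m : ℕ) (a : ℕ → ℝ) : Prop :=
  ∀ (n : ℕ), n ≤ m → ∀ (i j : Fin n → ℕ), StrictMono i → StrictMono j →
    0 ≤ (Matrix.of fun p q : Fin n => if i p ≤ j q then a (j q - i p) else 0).det

/-- A nonnegative sequence `(a_k)` is a TP_∞-preserver if for every totally positive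
sequence `(b_k)`, the sequence `(a_k b_k)` is totally positive. -/
def IsTPPreserver (a : ℕ → ℝ) : Prop :=
  ∀ b : ℕ → ℝ, IsTotallyPositive b → IsTotallyPositive (fun k => a k * b k)

/-- Toeplitz kernel of a sequence. -/
def Tk (a : ℕ → ℝ) (i j : ℕ) : ℝ := if i ≤ j then a (j - i) else 0

theorem Tk_rec {a b : ℕ → ℝ} {c : ℝ} (h0 : b 0 = a 0)
    (hs : ∀ k, b (k + 1) = a (k + 1) + c * b k) (i j : ℕ) :
    Tk b i (j + 1) = Tk a i (j + 1) + c * Tk b i j := by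
  unfold Tk
  rcases lt_trichotomy i (j + 1) with h | h | h
  · have h1 : i ≤ j := by omega
    have h2 : j + 1 - i = (j - i) + 1 := by omega
    simp [h1, h.le, h2, hs]
  · subst h
    simp [h0]
  · have h1 : ¬ i ≤ j := by omega
    have h2 : ¬ i ≤ j + 1 := by omega
    simp [h1, h2]

theorem Tk_sum {a b : ℕ → ℝ} {c : ℝ} (h0 : b 0 = a 0)
    (hs : ∀ k, b (k + 1) = a (k + 1) + c * b k) (i m d : ℕ) :
    Tk b i (m + d) = ∑ l ∈ Finset.Ioc m (m + d), c ^ (m + d - l) * Tk a i l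
      + c ^ d * Tk b i m := by
  induction d with
  | zero => simp
  | succ d ih =>
    rw [← add_assoc, Tk_rec h0 hs, ih, Finset.sum_Ioc_succ_top (by omega), mul_add, Finset.mul_sum]
    have : ∀ l ∈ Finset.Ioc m (m + d), c * (c ^ (m + d - l) * Tk a i l)
        = c ^ (m + d + 1 - l) * Tk a i l := by
      intro l hl
      rw [Finset.mem_Ioc] at hl
      have : m + d + 1 - l = (m + d - l) + 1 := by omega
      rw [this, pow_succ]; ring
    rw [Finset.sum_congr rfl this]
    simp only [Nat.sub_self, pow_zero, one_mul, pow_succ]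
    ring

theorem Tk_sum0 {a b : ℕ → ℝ} {c : ℝ} (h0 : b 0 = a 0)
    (hs : ∀ k, b (k + 1) = a (k + 1) + c * b k) (i d : ℕ) :
    Tk b i d = ∑ l ∈ Finset.Iic d, c ^ (d - l) * Tk a i l := by
  have h := Tk_sum h0 hs i 0 d
  have e : Tk b i 0 = Tk a i 0 := by unfold Tk; split_ifs <;> simp [h0]
  have e2 : Finset.Iic d = insert 0 (Finset.Ioc 0 d) := by
    ext x; simp only [Finset.mem_Iic, Finset.mem_insert, Finset.mem_Ioc]; omega
  rw [e2, Finset.sum_insert (by simp)]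
  simp only [zero_add] at h
  rw [h, e]; simp [add_comm]

theorem tp_geom {a b : ℕ → ℝ} {c : ℝ} (hc : 0 ≤ c) (h0 : b 0 = a 0)
    (hs : ∀ k, b (k + 1) = a (k + 1) + c * b k) (ha : IsTotallyPositive a) :
    IsTotallyPositive b := by
  intro n i j hi hj
  change 0 ≤ (Matrix.of fun p q : Fin n => Tk b (i p) (j q)).det
  cases n with
  | zero => simp
  | succ n =>
    let S : Fin (n + 1) → Finset ℕ :=
      Fin.cases (Finset.Iic (j 0)) (fun q => Finset.Ioc (j q.castSucc) (j q.succ))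
    have key : (Matrix.of fun p q : Fin (n + 1) => Tk b (i p) (j q)).det
        = (Matrix.of fun p q : Fin (n + 1) =>
            ∑ l ∈ S q, c ^ (j q - l) * Tk a (i p) l).det := by
      apply Matrix.det_eq_of_forall_col_eq_smul_add_pred
        (fun q : Fin n => c ^ (j q.succ - j q.castSucc))
      · intro p
        simp only [Matrix.of_apply]
        exact Tk_sum0 h0 hs _ _
      · intro p q
        simp only [Matrix.of_apply]
        have hlt : j q.castSucc < j q.succ := hj Fin.castSucc_lt_succ
        have := Tk_sum h0 hs (i p) (j q.castSucc) (j q.succ - j q.castSucc)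
        rw [Nat.add_sub_cancel' hlt.le] at this
        exact this
    rw [key, ← Matrix.det_transpose]
    have e : (Matrix.of fun p q : Fin (n + 1) =>
            ∑ l ∈ S q, c ^ (j q - l) * Tk a (i p) l).transpose
        = fun q => ∑ l ∈ S q, (c ^ (j q - l) • fun p => Tk a (i p) l) := by
      ext q p
      simp [Finset.sum_apply]
    have e2 : (Matrix.of fun p q : Fin (n + 1) =>
            ∑ l ∈ S q, c ^ (j q - l) * Tk a (i p) l).transpose.det
        = (Matrix.detRowAlternating (R := ℝ) (n := Fin (n + 1))).toMultilinearMap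
          (fun q => ∑ l ∈ S q, (c ^ (j q - l) • fun p => Tk a (i p) l)) := by
      rw [e]; rfl
    rw [e2, MultilinearMap.map_sum_finset]
    apply Finset.sum_nonneg
    intro r hr
    rw [Fintype.mem_piFinset] at hr
    rw [MultilinearMap.map_smul_univ]
    apply mul_nonneg
    · exact Finset.prod_nonneg fun q _ => pow_nonneg hc _
    · have hle : ∀ q, r q ≤ j q := by
        intro q
        have := hr q
        cases q using Fin.cases with
        | zero => simpa [S] using this
        | succ q => simp [S] at this; exact this.2
      have hr' : StrictMono r := by
        rw [Fin.strictMono_iff_lt_succ]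
        intro q
        have h1 := hr q.succ
        simp [S] at h1
        exact lt_of_le_of_lt (hle _) h1.1
      have h := ha (n + 1) i r hi hr'
      rw [← Matrix.det_transpose] at h
      exact h

theorem tp_delta : IsTotallyPositive (fun k => if k = 0 then 1 else 0) := by
  intro n i j hi hj
  have e : (Matrix.of fun p q : Fin n => if i p ≤ j q then
      (if j q - i p = 0 then (1 : ℝ) else 0) else 0)
      = Matrix.of fun p q : Fin n => if i p = j q then (1 : ℝ) else 0 := by
    ext p q
    simp only [Matrix.of_apply]
    split_ifs <;> first | rfl | omega
  rw [e]
  by_cases h : ∀ p, ∃ q, i p = j q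
  · have hsub : Finset.univ.image i ⊆ Finset.univ.image j := by
      intro x hx
      simp only [Finset.mem_image, Finset.mem_univ, true_and] at hx ⊢
      obtain ⟨p, rfl⟩ := hx
      obtain ⟨q, hq⟩ := h p
      exact ⟨q, hq.symm⟩
    have heq := Finset.eq_of_subset_of_card_le hsub (by
      rw [Finset.card_image_of_injective _ hi.injective,
        Finset.card_image_of_injective _ hj.injective])
    have hij : i = j := by
      rw [← hi.range_inj hj]
      have := congrArg (fun s : Finset ℕ => (s : Set ℕ)) heq
      simpa using this
    subst hij
    have : (Matrix.of fun p q : Fin n => if i p = i q then (1 : ℝ) else 0) = 1 := by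
      ext p q
      simp [Matrix.one_apply, hi.injective.eq_iff]
    rw [this]; simp
  · push Not at h
    obtain ⟨p, hp⟩ := h
    rw [Matrix.det_eq_zero_of_row_eq_zero p]
    intro q
    simp [hp q]

theorem tp_shift {h b : ℕ → ℝ} (h0 : b 0 = 0) (hs : ∀ k, b (k + 1) = h k)
    (ht : IsTotallyPositive h) : IsTotallyPositive b := by
  intro n i j hi hj
  have := ht n (fun p => i p + 1) j (fun x y hxy => Nat.add_lt_add_right (hi hxy) 1) hj
  convert this using 5 with p q
  by_cases h1 : i p + 1 ≤ j q
  · have h2 : i p ≤ j q := by omega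
    have h3 : j q - i p = (j q - (i p + 1)) + 1 := by omega
    rw [if_pos h1, if_pos h2, h3, hs]
  · rw [if_neg h1]
    split_ifs with h2
    · have : j q - i p = 0 := by omega
      rw [this, h0]
    · rfl

theorem tp_pow {c : ℝ} (hc : 0 ≤ c) : IsTotallyPositive (fun k => c ^ k) :=
  tp_geom (c := c) hc (by simp) (by intro k; simp [pow_succ, mul_comm]) tp_delta

/-- if `a` is a TP_∞-preserver then `((c^k-1)/(c-1) * a_k)` is
totally positive, for every `c > 0`, `c ≠ 1`. -/
theorem stmt_8 (a : ℕ → ℝ) (ha : ∀ k, 0 ≤ a k) (hpres : IsTPPreserver a) :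
    ∀ c : ℝ, 0 < c → c ≠ 1 →
      IsTotallyPositive (fun k => (c ^ k - 1) / (c - 1) * a k) := by
  intro c hc hc1
  have hne : c - 1 ≠ 0 := sub_ne_zero.mpr hc1
  have h1 : IsTotallyPositive (fun k => (c ^ (k + 1) - 1) / (c - 1)) := by
    refine tp_geom (a := fun k => c ^ k) (c := 1) zero_le_one ?_ ?_ (tp_pow hc.le)
    · simp [hne]
    · intro k
      field_simp
      ring
  have h2 : IsTotallyPositive (fun k => (c ^ k - 1) / (c - 1)) :=
    tp_shift (by simp) (fun k => rfl) h1
  have := hpres _ h2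
  simpa only [mul_comm] using this
end

section
/- If a nonnegative sequence (a_k)_{k=0}^∞ is a TP_∞-preserver, then for every d ≥ 0, the sequence (c_k)_{k=0}^∞ defined by c_0 = a_0/(d+1) and c_k = a_k for k ≥ 1 (the coefficient sequence of A(z) − (d/(d+1))·a_0, where A(z) = ∑ a_k z^k) is a totally positive sequence. -/
theorem det_col_aux {n : ℕ} (A : Matrix (Fin (n+1)) (Fin (n+1)) ℝ)
    (h : ∀ p : Fin n, A p.succ 0 = 0) :
    A.det = A 0 0 * (A.submatrix Fin.succ Fin.succ).det := by
  rw [Matrix.det_succ_column_zero, Fin.sum_univ_succ]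
  simp [h]

theorem det_row_aux {n : ℕ} (A : Matrix (Fin (n+1)) (Fin (n+1)) ℝ)
    (h : ∀ p : Fin n, A 0 p.succ = 0) :
    A.det = A 0 0 * (A.submatrix Fin.succ Fin.succ).det := by
  rw [Matrix.det_succ_row_zero, Fin.sum_univ_succ]
  simp [h]

/-- The coefficient sequence of `(1 + d z) / (1 - z)` is totally positive. -/
theorem tp_aux (d : ℝ) (hd : 0 ≤ d) :
    IsTotallyPositive (fun k => if k = 0 then 1 else d + 1) := by
  intro n
  induction n with
  | zero => intro i j _ _; simp
  | succ n ih =>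
    intro i j hi hj
    have key := ih (fun p => i p.succ) (fun p => j p.succ)
      (fun _ _ h => hi (Fin.succ_lt_succ_iff.2 h)) (fun _ _ h => hj (Fin.succ_lt_succ_iff.2 h))
    by_cases hc : ∀ p : Fin n, j 0 < i p.succ
    · rw [det_col_aux _ (fun p => by simp [hc p])]
      refine mul_nonneg ?_ key
      simp only [Matrix.of_apply]
      split_ifs <;> linarith
    · push Not at hc
      obtain ⟨p, hp⟩ := hc
      obtain ⟨m, rfl⟩ : ∃ m, n = m + 1 := ⟨n - 1, by have := p.2; omega⟩
      have h1 : i 1 ≤ j 0 := le_trans (hi.monotone (by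
        rw [Fin.le_def]; simp)) hp
      have h01 : i 0 < i 1 := hi (by simp)
      have hj0 : ∀ q, j 0 ≤ j q := fun q => hj.monotone (Fin.zero_le q)
      have hjs : ∀ q : Fin (m+1), j 0 < j q.succ := fun q => hj (Fin.succ_pos q)
      set A : Matrix (Fin (m+1+1)) (Fin (m+1+1)) ℝ := Matrix.of fun p q =>
        if i p ≤ j q then (fun k => if k = 0 then 1 else d + 1) (j q - i p) else 0 with hA
      have hA0 : ∀ q, A 0 q = d + 1 := by
        intro q
        have := hj0 q
        simp only [hA, Matrix.of_apply]
        rw [if_pos (by omega), if_neg (by omega)]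
      have hA1 : ∀ q : Fin (m+1), A 1 q.succ = d + 1 := by
        intro q
        have := hjs q
        simp only [hA, Matrix.of_apply]
        rw [if_pos (by omega), if_neg (by omega)]
      have hA10 : A 1 0 ≤ d + 1 := by
        simp only [hA, Matrix.of_apply]
        split_ifs <;> linarith
      have h01' : (0 : Fin (m+1+1)) ≠ 1 := by simp
      rw [← Matrix.det_updateRow_add_smul_self A h01' (-1), det_row_aux]
      · refine mul_nonneg ?_ ?_
        · simp [hA0]; linarith
        · refine key.trans_eq (congrArg Matrix.det ?_)
          ext p q
          simp [hA, Matrix.updateRow_apply]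
      · intro p
        simp [hA0, hA1]

/-- if `a` is a TP_∞-preserver then the sequence obtained by replacing
`a_0` by `a_0/(d+1)` is totally positive, for every `d ≥ 0`. -/
theorem stmt_9 (a : ℕ → ℝ) (ha : ∀ k, 0 ≤ a k) (hpres : IsTPPreserver a) :
    ∀ d : ℝ, 0 ≤ d →
      IsTotallyPositive (fun k => if k = 0 then a 0 / (d + 1) else a k) := by
  intro d hd n i j hi hj
  have hd1 : 0 < d + 1 := by linarith
  have h := hpres _ (tp_aux d hd) n i j hi hj
  have e : (Matrix.of fun p q : Fin n => if i p ≤ j q then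
        (fun k => if k = 0 then a 0 / (d + 1) else a k) (j q - i p) else 0)
      = (d + 1)⁻¹ • (Matrix.of fun p q : Fin n => if i p ≤ j q then
        (fun k => a k * (fun k => if k = 0 then 1 else d + 1) k) (j q - i p) else 0) := by
    ext p q
    simp only [Matrix.of_apply, Matrix.smul_apply, smul_eq_mul]
    split_ifs with h1 h2
    · rw [h2]; field_simp
    · field_simp
    · simp
  rw [e, Matrix.det_smul]
  exact mul_nonneg (by positivity) h
end

section
/- Let k ∈ ℕ, k ≥ 2, and β > 0, γ > 0, δ > 0. The Taylor coefficients of A_{k,β}(z) = (1 − βz)^{−k} are binom(s+k−1, k−1)·β^s, and the Taylor coefficients of F_{γ,δ}(z) = e^{γz}/(1 − δz) are c_s = ∑_{j=0}^s (γ^j/j!)·δ^{s−j}. Then for all complex z with |z| < 1/(δβ), the Hadamard product satisfies ∑_{s=0}^∞ binom(s+k−1, k−1) β^s c_s z^s = (k−1)!·e^{γβz}/(1 − δβz)^k · Q_{2k−2}(z), where Q_{2k−2}(z) = ∑_{s=0}^{k−1} ∑_{t=k−s−1}^{k−1} [ (γβ)^{k−1−s} (δβ)^{t−k+s+1} / ((k−1−s)!·(k−1−t)!·t!)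 ] · z^t (1 − δβz)^{2k−t−s−2}, a polynomial of degree at most 2k−2. -/
lemma hasSum_cg {f g : ℕ → ℂ} {a : ℂ} (h : HasSum g a) (e : ∀ n, f n = g n) : HasSum f a := by
  rw [funext e]
  exact h

lemma vdm (m p n : ℕ) : (p + n + m).choose m =
    ∑ j ∈ Finset.range (m + 1), ∑ t ∈ Finset.Icc j m,
      m.choose t * (p.choose j * n.choose (t - j)) := by
  have h1 : (p + n + m).choose m = ∑ t ∈ Finset.range (m + 1), m.choose t *
      ∑ j ∈ Finset.range (t + 1), p.choose j * n.choose (t - j) := by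
    rw [Nat.add_choose_eq, Finset.Nat.sum_antidiagonal_eq_sum_range_succ_mk]
    refine Finset.sum_congr rfl fun t ht => ?_
    have ht' : t ≤ m := Nat.lt_succ_iff.mp (Finset.mem_range.mp ht)
    rw [Nat.add_choose_eq, Finset.Nat.sum_antidiagonal_eq_sum_range_succ_mk]
    simp only [Nat.choose_symm ht']
    rw [mul_comm]
  rw [h1]
  simp only [Finset.mul_sum]
  refine Finset.sum_comm' ?_
  intro t j
  simp only [Finset.mem_range, Finset.mem_Icc]
  omega

lemma hasSum_geo (l : ℕ) (y : ℂ) (hy : ‖y‖ < 1) :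
    HasSum (fun n : ℕ => (n.choose l : ℂ) * y ^ n) (y ^ l / (1 - y) ^ (l + 1)) := by
  have h := (hasSum_choose_mul_geometric_of_norm_lt_one l hy).mul_left (y ^ l)
  rw [mul_one_div] at h
  rw [← hasSum_nat_add_iff' l]
  have h0 : ∑ i ∈ Finset.range l, (i.choose l : ℂ) * y ^ i = 0 :=
    Finset.sum_eq_zero fun i hi => by
      rw [Nat.choose_eq_zero_of_lt (Finset.mem_range.mp hi)]; simp
  rw [h0, sub_zero]
  refine hasSum_cg h ?_
  intro n
  ring

lemma hasSum_ex (j : ℕ) (x : ℂ) :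
    HasSum (fun n : ℕ => (n.choose j : ℂ) * (x ^ n / (n.factorial : ℂ)))
      (x ^ j / (j.factorial : ℂ) * Complex.exp x) := by
  have h : HasSum (fun n : ℕ => x ^ n / (n.factorial : ℂ)) (Complex.exp x) := by
    rw [Complex.exp_eq_exp_ℂ]
    exact NormedSpace.expSeries_div_hasSum_exp x
  have h := h.mul_left (x ^ j / (j.factorial : ℂ))
  rw [← hasSum_nat_add_iff' j]
  have h0 : ∑ i ∈ Finset.range j, (i.choose j : ℂ) * (x ^ i / (i.factorial : ℂ)) = 0 :=
    Finset.sum_eq_zero fun i hi => by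
      rw [Nat.choose_eq_zero_of_lt (Finset.mem_range.mp hi)]; simp
  rw [h0, sub_zero]
  refine hasSum_cg h ?_
  intro n
  have e : ((n + j).choose j : ℂ) * (n.factorial) * (j.factorial) = (n + j).factorial := by
    exact_mod_cast (by
      have := Nat.add_choose_mul_factorial_mul_factorial n j
      exact this)
  have a1 : (n.factorial : ℂ) ≠ 0 := by exact_mod_cast n.factorial_ne_zero
  have a2 : (j.factorial : ℂ) ≠ 0 := by exact_mod_cast j.factorial_ne_zero
  have a3 : ((n + j).factorial : ℂ) ≠ 0 := by exact_mod_cast (n + j).factorial_ne_zero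
  field_simp
  rw [← e]
  ring

lemma hasSum_conv (j l : ℕ) (x y : ℂ) (hy : ‖y‖ < 1) :
    HasSum (fun s : ℕ => ∑ i ∈ Finset.range (s + 1),
        ((i.choose j : ℂ) * (x ^ i / (i.factorial : ℂ))) *
          (((s - i).choose l : ℂ) * y ^ (s - i)))
      ((x ^ j / (j.factorial : ℂ) * Complex.exp x) * (y ^ l / (1 - y) ^ (l + 1))) := by
  have hf := hasSum_ex j x
  have hg := hasSum_geo l y hy
  have hs := (summable_norm_sum_mul_range_of_summable_norm hf.summable.norm hg.summable.norm).of_norm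
  have ht := tsum_mul_tsum_eq_tsum_sum_range_of_summable_norm hf.summable.norm hg.summable.norm
  rw [hf.tsum_eq, hg.tsum_eq] at ht
  rw [ht]
  exact hs.hasSum

lemma main_sum (m : ℕ) (x y : ℂ) (hy : ‖y‖ < 1) :
    HasSum (fun s : ℕ => ((s + m).choose m : ℂ) * ∑ i ∈ Finset.range (s + 1),
        x ^ i / (i.factorial : ℂ) * y ^ (s - i))
      (∑ j ∈ Finset.range (m + 1), ∑ t ∈ Finset.Icc j m, (m.choose t : ℂ) *
        ((x ^ j / (j.factorial : ℂ) * Complex.exp x) *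
          (y ^ (t - j) / (1 - y) ^ (t - j + 1)))) := by
  have h := hasSum_sum (s := Finset.range (m + 1)) fun j _ =>
    hasSum_sum (s := Finset.Icc j m) fun t _ =>
      (hasSum_conv j (t - j) x y hy).mul_left (m.choose t : ℂ)
  refine hasSum_cg h ?_
  intro s
  simp only [Finset.mul_sum]
  rw [Finset.sum_congr rfl fun j _ => Finset.sum_comm, Finset.sum_comm]
  refine Finset.sum_congr rfl fun i hi => ?_
  have hi' : i + (s - i) = s := by have := Finset.mem_range.mp hi; omega
  have v := vdm m i (s - i)
  rw [hi'] at v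
  rw [v]
  push_cast
  simp only [Finset.sum_mul]
  refine Finset.sum_congr rfl fun j _ => Finset.sum_congr rfl fun t _ => ?_
  ring

/-- the Hadamard product of `A_{k,β}(z) = (1-βz)^{-k}` (Taylor
coefficients `C(s+k-1, k-1) β^s`) and `F_{γ,δ}(z) = e^{γz}/(1-δz)` (Taylor
coefficients `c_s = ∑_{j=0}^s γ^j/j! · δ^{s-j}`) equals
`(k-1)! e^{γβz}/(1-δβz)^k · Q_{2k-2}(z)` for `|z| < 1/(δβ)`, where `Q_{2k-2}` is the
explicit polynomial of degree at most `2k-2` from the paper. -/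
theorem stmt_11 (k : ℕ) (hk : 2 ≤ k) (β γ δ : ℝ) (hβ : 0 < β) (hγ : 0 < γ) (hδ : 0 < δ)
    (c : ℕ → ℝ)
    (hc : ∀ s : ℕ, c s = ∑ j ∈ Finset.range (s + 1),
      γ ^ j / (Nat.factorial j) * δ ^ (s - j)) :
    ∀ z : ℂ, ‖z‖ < 1 / (δ * β) →
      ∑' s : ℕ, (((s + k - 1).choose (k - 1) : ℂ) * (β : ℂ) ^ s * (c s : ℂ)) * z ^ s
        = ((Nat.factorial (k - 1) : ℂ) * Complex.exp ((γ : ℂ) * (β : ℂ) * z)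
              / (1 - (δ : ℂ) * (β : ℂ) * z) ^ k)
          * ∑ s ∈ Finset.range k, ∑ t ∈ Finset.Icc (k - s - 1) (k - 1),
              (((γ * β) ^ (k - 1 - s) * (δ * β) ^ (t + s + 1 - k)
                / ((Nat.factorial (k - 1 - s)) * (Nat.factorial (k - 1 - t))
                    * (Nat.factorial t)) : ℝ) : ℂ)
                * z ^ t * (1 - (δ : ℂ) * (β : ℂ) * z) ^ (2 * k - t - s - 2) := by
  intro z hz
  obtain ⟨m, rfl⟩ : ∃ m, k = m + 1 := ⟨k - 1, by omega⟩
  have hdb : 0 < δ * β := mul_pos hδ hβ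
  have hy : ‖(δ : ℂ) * (β : ℂ) * z‖ < 1 := by
    rw [norm_mul, norm_mul, Complex.norm_real, Complex.norm_real, Real.norm_of_nonneg hδ.le,
      Real.norm_of_nonneg hβ.le]
    rw [lt_div_iff₀ hdb] at hz
    linarith
  have hne : (1 - (δ : ℂ) * (β : ℂ) * z) ≠ 0 := by
    intro h
    rw [← sub_eq_zero.mp h] at hy
    simp at hy
  have h := (main_sum m ((γ : ℂ) * (β : ℂ) * z) ((δ : ℂ) * (β : ℂ) * z) hy).tsum_eq
  have hL : ∀ s : ℕ, (((s + (m + 1) - 1).choose (m + 1 - 1) : ℂ) * (β : ℂ) ^ s * (c s : ℂ)) * z ^ s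
      = ((s + m).choose m : ℂ) * ∑ i ∈ Finset.range (s + 1),
        ((γ : ℂ) * (β : ℂ) * z) ^ i / (i.factorial : ℂ) * ((δ : ℂ) * (β : ℂ) * z) ^ (s - i) := by
    intro s
    have e1 : s + (m + 1) - 1 = s + m := by omega
    rw [e1, Nat.add_sub_cancel, hc s]
    push_cast
    simp only [Finset.mul_sum, Finset.sum_mul]
    refine Finset.sum_congr rfl fun i hi => ?_
    obtain ⟨n, rfl⟩ : ∃ n, s = i + n := ⟨s - i, by have := Finset.mem_range.mp hi; omega⟩
    rw [Nat.add_sub_cancel_left]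
    ring
  rw [tsum_congr hL, h, ← Finset.sum_range_reflect, Finset.mul_sum]
  refine Finset.sum_congr rfl fun s hs => ?_
  have hs' : s ≤ m := Nat.lt_succ_iff.mp (Finset.mem_range.mp hs)
  have e2 : m + 1 - s - 1 = m - s := by omega
  have e3 : m + 1 - 1 - s = m - s := by omega
  rw [e2, e3, Nat.add_sub_cancel, Finset.mul_sum]
  refine Finset.sum_congr rfl fun t ht => ?_
  obtain ⟨ht1, ht2⟩ := Finset.mem_Icc.mp ht
  obtain ⟨j, rfl⟩ : ∃ j, m = s + j := ⟨m - s, by omega⟩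
  have e4 : s + j - s = j := by omega
  rw [e4] at ht1 ⊢
  obtain ⟨l, rfl⟩ : ∃ l, t = j + l := ⟨t - j, by omega⟩
  obtain ⟨i, rfl⟩ : ∃ i, s = l + i := ⟨s - l, by omega⟩
  have e5 : j + l - j = l := by omega
  have e6 : j + l + (l + i) + 1 - (l + i + j + 1) = l := by omega
  have e7 : l + i + j - (j + l) = i := by omega
  have e8 : 2 * (l + i + j + 1) - (j + l) - (l + i) - 2 = i + j := by omega
  rw [e5, e6, e7, e8]
  have a1 : ((j + l).factorial : ℂ) ≠ 0 := by exact_mod_cast (j + l).factorial_ne_zero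
  have a2 : (j.factorial : ℂ) ≠ 0 := by exact_mod_cast j.factorial_ne_zero
  have a3 : (i.factorial : ℂ) ≠ 0 := by exact_mod_cast i.factorial_ne_zero
  have e : ((l + i + j).choose (j + l) : ℂ) * ((j + l).factorial) * (i.factorial)
      = (l + i + j).factorial := by
    have := Nat.choose_mul_factorial_mul_factorial (n := l + i + j) (k := j + l) (by omega)
    rw [e7] at this
    exact_mod_cast this
  rw [← e]
  push_cast
  generalize hw : (1 - (δ : ℂ) * (β : ℂ) * z) = w at hne ⊢
  have e9 : w ^ (l + i + j + 1) = w ^ (l + 1) * w ^ (i + j) := by ring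
  rw [e9]
  field_simp
  ring
end

section
/- Let (q_k)_{k=2}^∞ be positive reals and define the sequence (c_k)_{k=0}^∞ by c_0 = c_1 = 1 and c_k = 1/(q_2^{k−1} q_3^{k−2} ⋯ q_{k−1}^2 q_k) for k ≥ 2. If (c_k)_{k=0}^∞ is a totally positive sequence, then q_2 ≥ 1, q_3 ≥ 1, and q_2^2 q_3 − 2 q_2 q_3 + 1 ≥ 0. -/
/-- necessary conditions on the parameters `q_k` for the sequence
`c_0 = c_1 = 1`, `c_k = 1/(q_2^{k-1} q_3^{k-2} ⋯ q_k)` to be totally positive. -/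
theorem stmt_14 (q : ℕ → ℝ) (hq : ∀ k, 2 ≤ k → 0 < q k) (c : ℕ → ℝ)
    (hc0 : c 0 = 1) (hc1 : c 1 = 1)
    (hck : ∀ k, 2 ≤ k → c k = 1 / ∏ j ∈ Finset.Icc 2 k, q j ^ (k + 1 - j))
    (htp : IsTotallyPositive c) :
    1 ≤ q 2 ∧ 1 ≤ q 3 ∧ 0 ≤ q 2 ^ 2 * q 3 - 2 * (q 2 * q 3) + 1 := by
  have h2 := hq 2 le_rfl
  have h3 := hq 3 (by norm_num)
  have e2 : Finset.Icc 2 2 = ({2} : Finset ℕ) := by decide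
  have e3 : Finset.Icc 2 3 = ({2, 3} : Finset ℕ) := by decide
  have c2 : c 2 = 1 / q 2 := by
    rw [hck 2 le_rfl, e2]; simp
  have c3 : c 3 = 1 / (q 2 ^ 2 * q 3) := by
    rw [hck 3 (by norm_num), e3]; simp
  have A := htp 2 ![0, 1] ![1, 2] (by decide) (by decide)
  have B := htp 2 ![0, 1] ![2, 3] (by decide) (by decide)
  have C := htp 3 ![0, 1, 2] ![1, 2, 3] (by decide) (by decide)
  simp [Matrix.det_fin_two, hc0, hc1, c2] at A
  simp [Matrix.det_fin_two, hc1, c2, c3] at B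
  simp [Matrix.det_fin_three, hc0, hc1, c2, c3] at C
  refine ⟨(inv_le_one₀ h2).1 A, ?_, ?_⟩
  · have := mul_le_mul_of_nonneg_left B (by positivity : 0 ≤ q 2 ^ 2 * q 3)
    have l : q 2 ^ 2 * q 3 * ((q 3)⁻¹ * (q 2 ^ 2)⁻¹) = 1 := by field_simp
    have r : q 2 ^ 2 * q 3 * ((q 2)⁻¹ * (q 2)⁻¹) = q 3 := by field_simp
    linarith
  · have := mul_nonneg (by positivity : 0 ≤ q 2 ^ 2 * q 3) C
    have l : q 2 ^ 2 * q 3 * (1 - (q 2)⁻¹ - (q 2)⁻¹ + (q 3)⁻¹ * (q 2 ^ 2)⁻¹)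
        = q 2 ^ 2 * q 3 - 2 * (q 2 * q 3) + 1 := by
      field_simp
      ring
    linarith
end

section
/- Let a > 0, b > 0, and assume both polynomials P(x) = 1 + x + x^2/a + x^3/(a^2 b) and T(x) = x + x^2/a + x^3/(a^2 b) have only real (necessarily nonpositive) zeros. Then for every totally positive sequence (c_k)_{k=0}^∞, the sequence (c_0, c_1, c_2/a, c_3/(a^2 b), 0, 0, 0, ...) is totally positive. -/
namespace TPAux

/-- The normalized discriminant. -/
def F (p q : ℝ) : ℝ := 1 - 4 * p - 4 * q + 18 * p * q - 27 * p ^ 2 * q ^ 2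

lemma p_le {p q : ℝ} (hp3 : p ≤ 1 / 3) (hq : q ≤ 1 / 4) (hF : 0 ≤ F p q) : p ≤ 8 / 27 := by
  by_contra h
  push Not at h
  unfold F at hF
  have h1 : 0 ≤ 18 * p - 4 - 27 * p ^ 2 * (1 / 2) := by nlinarith
  have h2 : 0 ≤ (1 / 4 - q) * (18 * p - 4 - 27 * p ^ 2 * (1 / 2)) :=
    mul_nonneg (by linarith) h1
  have h3 : 0 ≤ 27 * p ^ 2 * (1 / 4 - q) ^ 2 := by positivity
  nlinarith

lemma F_main {p q u w : ℝ} (hp : 0 < p) (hp3 : p ≤ 1 / 3) (hq0 : 0 < q) (hq : q ≤ 1 / 4)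
    (hF : 0 ≤ F p q) (hu0 : 0 < u) (hu : u ≤ 1) (hw0 : 0 ≤ w) (hw : w ≤ 1)
    (h3 : 2 * u - 1 ≤ u ^ 2 * w) : 0 ≤ F (u * p) (w * q) := by
  have hp8 := p_le hp3 hq hF
  have hid : F (u * p) q = (1 - u) * (1 - 4 * q) + u * F p q
      + 27 * p ^ 2 * q ^ 2 * u * (1 - u) := by unfold F; ring
  have hu1 : 0 ≤ 1 - u := by linarith
  have hw1 : 0 ≤ 1 - w := by linarith
  have hq1 : 0 ≤ 1 - 4 * q := by linarith
  have hFu : 0 ≤ F (u * p) q := by rw [hid]; positivity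
  by_cases hc : u * p ≤ 1 / 4
  · have e : F (u * p) (w * q) = (1 - w) * (1 - 4 * (u * p)) + w * F (u * p) q
      + 27 * (u * p) ^ 2 * q ^ 2 * w * (1 - w) := by unfold F; ring
    have : 0 ≤ 1 - 4 * (u * p) := by linarith
    rw [e]; positivity
  · push Not at hc
    have hu2 : 27 / 32 ≤ u := by nlinarith
    have hw2 : u ^ 2 * (1 - w) ≤ (1 - u) ^ 2 := by nlinarith
    have hw3 : (1 - w) ≤ (1 - u) * (160 / 729) := by
      have : (27 / 32) ^ 2 * (1 - w) ≤ u ^ 2 * (1 - w) := by gcongr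
      have h5 : (1 - u) ^ 2 ≤ (1 - u) * (5 / 32) := by nlinarith
      linarith
    have hP : u * p ≤ 8 / 27 := by nlinarith
    have e : F (u * p) (w * q) = F (u * p) q + (1 - w) * q * (4 - 18 * (u * p))
      + (1 - w) * q * (27 * (u * p) ^ 2 * q * (1 + w)) := by unfold F; ring
    have b1 : -((1 - u) * (160 / 729)) * q * (4 / 3) ≤ (1 - w) * q * (4 - 18 * (u * p)) := by
      have s1 : (1 - w) * q * (-(4 / 3)) ≤ (1 - w) * q * (4 - 18 * (u * p)) := by
        apply mul_le_mul_of_nonneg_left _ (by positivity); linarith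
      have s2 : (1 - w) * q ≤ ((1 - u) * (160 / 729)) * q := by gcongr
      linarith
    have b2 : 0 ≤ (1 - w) * q * (27 * (u * p) ^ 2 * q * (1 + w)) := by positivity
    have b3 : (1 / 16 : ℝ) ≤ p ^ 2 * u := by nlinarith
    have b4 : (1 - u) * (27 * q ^ 2 * (1 / 16)) ≤ (1 - u) * (27 * q ^ 2 * (p ^ 2 * u)) := by
      gcongr
    have b5 : 0 ≤ 1 - 4 * q + 27 * q ^ 2 * (1 / 16) - (160 / 729) * q * (4 / 3) := by nlinarith
    have b6 := mul_nonneg hu1 b5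
    have b7 : 0 ≤ u * F p q := by positivity
    rw [e, hid]
    nlinarith

lemma disc_nonneg {p q c0 c1 c2 c3 : ℝ} (hp : 0 < p) (hp3 : p ≤ 1 / 3) (hq0 : 0 < q)
    (hq : q ≤ 1 / 4) (hF : 0 ≤ F p q) (h0 : 0 ≤ c0) (h1 : 0 ≤ c1) (h2 : 0 ≤ c2) (h3 : 0 ≤ c3)
    (m1 : c0 * c2 ≤ c1 ^ 2) (m2 : c1 * c3 ≤ c2 ^ 2) (m3 : c0 * c3 ≤ c1 * c2)
    (m4 : 0 ≤ c1 ^ 3 - 2 * c0 * c1 * c2 + c0 ^ 2 * c3) :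
    0 ≤ (c2 * p) ^ 2 * c1 ^ 2 - 4 * (c3 * (p ^ 2 * q)) * c1 ^ 3 - 4 * (c2 * p) ^ 3 * c0
      + 18 * (c3 * (p ^ 2 * q)) * (c2 * p) * c1 * c0 - 27 * (c3 * (p ^ 2 * q)) ^ 2 * c0 ^ 2 := by
  rcases h0.eq_or_lt with rfl | h0
  · have : 0 ≤ p ^ 2 * c1 ^ 2 * (c2 ^ 2 - 4 * q * (c1 * c3)) := by
      apply mul_nonneg (by positivity)
      have : 0 ≤ c1 * c3 := by positivity
      nlinarith
    nlinarith
  rcases h1.eq_or_lt with rfl | h1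
  · have e2 : c2 = 0 := by nlinarith
    have e3 : c3 = 0 := by nlinarith
    subst e2 e3; simp
  rcases h2.eq_or_lt with rfl | h2
  · have e3 : c3 = 0 := by nlinarith
    subst e3; simp
  have key := F_main (u := c0 * c2 / c1 ^ 2) (w := c1 * c3 / c2 ^ 2) hp hp3 hq0 hq hF
    (by positivity) (by rw [div_le_one (by positivity)]; exact m1) (by positivity)
    (by rw [div_le_one (by positivity)]; exact m2)
    (by
      have : 0 ≤ (c1 ^ 3 - 2 * c0 * c1 * c2 + c0 ^ 2 * c3) / c1 ^ 3 := by positivity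
      have e : (c1 ^ 3 - 2 * c0 * c1 * c2 + c0 ^ 2 * c3) / c1 ^ 3 =
        (c0 * c2 / c1 ^ 2) ^ 2 * (c1 * c3 / c2 ^ 2) - (2 * (c0 * c2 / c1 ^ 2) - 1) := by
        field_simp
        ring
      linarith)
  have : 0 ≤ c1 ^ 2 * c2 ^ 2 * p ^ 2 *
    F (c0 * c2 / c1 ^ 2 * p) (c1 * c3 / c2 ^ 2 * q) := by positivity
  refine this.trans_eq ?_
  unfold F
  field_simp
  ring

/-- Nonnegative cubic has a nonpositive root. -/
lemma exists_root {A B C D : ℝ} (hA : 0 < A) (hB : 0 ≤ B) (hC : 0 ≤ C) (hD : 0 ≤ D) :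
    ∃ s, 0 ≤ s ∧ A * (-s) ^ 3 + B * (-s) ^ 2 + C * (-s) + D = 0 := by
  set R := (B + D) / A + 1 with hR
  have hAR : A * R = B + D + A := by rw [hR]; field_simp
  have hR1 : 1 ≤ R := by rw [hR]; have : 0 ≤ (B + D) / A := by positivity
                         linarith
  have hcont : ContinuousOn (fun s : ℝ => A * (-s) ^ 3 + B * (-s) ^ 2 + C * (-s) + D)
      (Set.Icc 0 R) := by fun_prop
  have hiv := intermediate_value_Icc' (by linarith : (0 : ℝ) ≤ R) hcont
  have hmem : (0 : ℝ) ∈ Set.Icc (A * (-R) ^ 3 + B * (-R) ^ 2 + C * (-R) + D)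
      (A * (-(0:ℝ)) ^ 3 + B * (-(0:ℝ)) ^ 2 + C * (-(0:ℝ)) + D) := by
    constructor
    · have e : A * (-R) ^ 3 = -((B + D + A) * R ^ 2) := by rw [← hAR]; ring
      have h1 : 1 ≤ R ^ 2 := by nlinarith
      have h2 : 0 ≤ C * R := by positivity
      have h3 : D * 1 ≤ D * R ^ 2 := by gcongr
      have h4 : 0 ≤ A * R ^ 2 := by positivity
      rw [e]; nlinarith
    · simpa using hD
  obtain ⟨s, hs, hs0⟩ := hiv hmem
  exact ⟨s, hs.1, hs0⟩

lemma quad_disc {A E G : ℝ} (hA : 0 < A)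
    (h : ∀ z : ℂ, (A : ℂ) * z ^ 2 + E * z + G = 0 → ∃ x : ℝ, z = x) : 0 ≤ E ^ 2 - 4 * A * G := by
  by_contra hn
  push Not at hn
  have hpos : 0 < 4 * A * G - E ^ 2 := by linarith
  set t := Real.sqrt (4 * A * G - E ^ 2) with ht
  have ht0 : 0 < t := Real.sqrt_pos.mpr hpos
  have ht2 : t ^ 2 = 4 * A * G - E ^ 2 := Real.sq_sqrt hpos.le
  have hAc : (A : ℂ) ≠ 0 := by exact_mod_cast hA.ne'
  have ht2c : (t : ℂ) ^ 2 = 4 * A * G - E ^ 2 := by exact_mod_cast ht2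
  obtain ⟨x, hx⟩ := h ((-E + t * Complex.I) / (2 * A)) (by
    field_simp
    ring_nf
    rw [Complex.I_sq, ht2c]
    ring)
  have h2 : (-E + t * Complex.I) = (x : ℂ) * (2 * A) := by
    rw [← hx]; field_simp
  have h3 := congrArg Complex.im h2
  simp at h3
  exact ht0.ne' h3

/-- The weighted sequence obtained by multiplying a generating function by `β + α x`. -/
def mulLin (β α : ℝ) (d : ℕ → ℝ) : ℕ → ℝ
  | 0 => β * d 0
  | k + 1 => β * d (k + 1) + α * d k

lemma tp_mulLin {β α : ℝ} (hβ : 0 ≤ β) (hα : 0 ≤ α) {d : ℕ → ℝ} (hd : IsTotallyPositive d) :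
    IsTotallyPositive (mulLin β α d) := by
  intro n i j hi hj
  let M : ℕ → Fin n → ℝ := fun r q => if r ≤ j q then d (j q - r) else 0
  have hrow : (Matrix.of fun p q : Fin n => if i p ≤ j q then mulLin β α d (j q - i p) else 0)
      = Matrix.of ((fun p => β • M (i p)) + (fun p => α • M (i p + 1))) := by
    ext p q
    simp only [Matrix.of_apply, Pi.add_apply, Pi.smul_apply, smul_eq_mul, M]
    rcases lt_trichotomy (i p) (j q) with h | h | h
    · obtain ⟨k, hk⟩ : ∃ k, j q = i p + k + 1 := ⟨j q - i p - 1, by omega⟩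
      rw [hk]
      have e1 : i p + k + 1 - i p = k + 1 := by omega
      have e2 : i p + k + 1 - (i p + 1) = k := by omega
      rw [if_pos (by omega), if_pos (by omega), if_pos (by omega), e1, e2, mulLin]
    · rw [← h]; simp [mulLin]
    · rw [if_neg (by omega), if_neg (by omega), if_neg (by omega)]; simp
  rw [hrow]
  change 0 ≤ Matrix.detRowAlternating _
  have hadd := (Matrix.detRowAlternating (n := Fin n) (R := ℝ)).toMultilinearMap.map_add_univ
    (fun p => β • M (i p)) (fun p => α • M (i p + 1))
  refine le_of_le_of_eq ?_ hadd.symm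
  apply Finset.sum_nonneg
  intro s _
  have hpw : s.piecewise (fun p => β • M (i p)) (fun p => α • M (i p + 1)) =
      fun p => (if p ∈ s then β else α) • M (if p ∈ s then i p else i p + 1) := by
    funext p
    by_cases hp : p ∈ s <;> simp [hp]
  rw [hpw, MultilinearMap.map_smul_univ, smul_eq_mul]
  apply mul_nonneg
  · apply Finset.prod_nonneg
    intro p _
    split_ifs <;> assumption
  set r : Fin n → ℕ := fun p => if p ∈ s then i p else i p + 1 with hr
  have hmono : Monotone r := by
    intro x y hxy
    rcases hxy.eq_or_lt with rfl | hxy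
    · exact le_rfl
    · have := hi hxy
      simp only [hr]; split_ifs <;> omega
  change 0 ≤ Matrix.det (Matrix.of fun p => M (r p))
  by_cases hinj : Function.Injective r
  · exact hd n r j (hmono.strictMono_of_injective hinj) hj
  · simp only [Function.Injective, not_forall] at hinj
    obtain ⟨x, y, hxy, hne⟩ := hinj
    refine (Matrix.det_zero_of_row_eq hne ?_).ge
    funext q
    simp only [Matrix.of_apply, hxy]

/-- The delta sequence. -/
def delta (D : ℝ) : ℕ → ℝ := fun k => if k = 0 then D else 0

lemma tp_delta {D : ℝ} (hD : 0 ≤ D) : IsTotallyPositive (delta D) := by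
  intro n i j hi hj
  by_cases h : ∀ p, i p ∈ Set.range j
  · have hr : Set.range i = Set.range j := by
      have hsub : Finset.univ.image i ⊆ Finset.univ.image j := by
        intro x hx
        simp only [Finset.mem_image, Finset.mem_univ, true_and] at hx ⊢
        obtain ⟨p, rfl⟩ := hx
        exact h p
      have := Finset.eq_of_subset_of_card_le hsub (by
        rw [Finset.card_image_of_injective _ hi.injective,
          Finset.card_image_of_injective _ hj.injective])
      have h2 := congrArg (fun s : Finset ℕ => (s : Set ℕ)) this
      simpa using h2
    have hij : i = j := (StrictMono.range_inj hi hj).1 hr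
    subst hij
    have : (Matrix.of fun p q : Fin n => if i p ≤ i q then delta D (i q - i p) else 0)
        = Matrix.diagonal (fun _ => D) := by
      ext p q
      simp only [Matrix.of_apply, Matrix.diagonal_apply, delta]
      by_cases hpq : p = q
      · subst hpq; simp
      · have : i p ≠ i q := fun e => hpq (hi.injective e)
        rw [if_neg hpq]
        split_ifs <;> first | rfl | omega
    rw [this, Matrix.det_diagonal]
    exact Finset.prod_nonneg fun _ _ => hD
  · push Not at h
    obtain ⟨p, hp⟩ := h
    rw [Matrix.det_eq_zero_of_row_eq_zero p]
    intro q
    have : j q ≠ i p := fun e => hp ⟨q, e⟩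
    simp only [Matrix.of_apply, delta]
    split_ifs <;> first | rfl | omega

/-- Four-term sequence. -/
def seq4 (D C B A : ℝ) : ℕ → ℝ := fun k =>
  if k = 0 then D else if k = 1 then C else if k = 2 then B else if k = 3 then A else 0

lemma tp_prod {k b1 a1 b2 a2 b3 a3 D C B A : ℝ} (hk : 0 ≤ k) (h1 : 0 ≤ b1) (h2 : 0 ≤ a1)
    (h3 : 0 ≤ b2) (h4 : 0 ≤ a2) (h5 : 0 ≤ b3) (h6 : 0 ≤ a3)
    (hD : D = k * (b1 * b2 * b3)) (hC : C = k * (a1 * b2 * b3 + b1 * a2 * b3 + b1 * b2 * a3))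
    (hB : B = k * (a1 * a2 * b3 + a1 * b2 * a3 + b1 * a2 * a3)) (hA : A = k * (a1 * a2 * a3)) :
    IsTotallyPositive (seq4 D C B A) := by
  have := tp_mulLin h1 h2 (tp_mulLin h3 h4 (tp_mulLin h5 h6 (tp_delta hk)))
  convert this using 1
  funext m
  rcases m with _ | _ | _ | _ | m
  · simp [seq4, mulLin, delta, hD]; ring
  · simp [seq4, mulLin, delta, hC]; ring
  · simp [seq4, mulLin, delta, hB]; ring
  · simp [seq4, mulLin, delta, hA]; ring
  · simp [seq4, mulLin, delta]

/-- Factor a real quadratic. -/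
lemma quad_factor {A E G : ℝ} (hA : 0 < A) (h : 0 ≤ E ^ 2 - 4 * A * G) :
    ∃ y1 y2, E = A * (y1 + y2) ∧ G = A * (y1 * y2) := by
  set t := Real.sqrt (E ^ 2 - 4 * A * G) with ht
  have ht2 : t ^ 2 = E ^ 2 - 4 * A * G := Real.sq_sqrt h
  refine ⟨(E + t) / (2 * A), (E - t) / (2 * A), ?_, ?_⟩
  · field_simp; ring
  · field_simp; nlinarith

lemma tp_cubic {D C B A : ℝ} (hD : 0 ≤ D) (hC : 0 ≤ C) (hB : 0 ≤ B) (hA : 0 ≤ A)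
    (hdisc : 0 ≤ B ^ 2 * C ^ 2 - 4 * A * C ^ 3 - 4 * B ^ 3 * D + 18 * A * B * C * D
      - 27 * A ^ 2 * D ^ 2) : IsTotallyPositive (seq4 D C B A) := by
  rcases hA.eq_or_lt with rfl | hA
  · rcases hB.eq_or_lt with rfl | hB
    · exact tp_prod (k := 1) (b1 := D) (a1 := C) (b2 := 1) (a2 := 0) (b3 := 1) (a3 := 0)
        zero_le_one hD hC zero_le_one le_rfl zero_le_one le_rfl
        (by ring) (by ring) (by ring) (by ring)
    · have h : 0 ≤ C ^ 2 - 4 * B * D := by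
        have : 0 ≤ B ^ 2 * (C ^ 2 - 4 * B * D) := by nlinarith
        exact nonneg_of_mul_nonneg_right this (by positivity)
      obtain ⟨y1, y2, e1, e2⟩ := quad_factor hB h
      have hs : 0 ≤ y1 + y2 := by
        rw [e1] at hC; exact nonneg_of_mul_nonneg_right hC hB
      have hm : 0 ≤ y1 * y2 := by
        rw [e2] at hD; exact nonneg_of_mul_nonneg_right hD hB
      have hy1 : 0 ≤ y1 := by by_contra hn; push Not at hn; nlinarith
      have hy2 : 0 ≤ y2 := by by_contra hn; push Not at hn; nlinarith
      exact tp_prod (k := B) (b1 := y1) (a1 := 1) (b2 := y2) (a2 := 1) (b3 := 1) (a3 := 0)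
        hB.le hy1 zero_le_one hy2 zero_le_one zero_le_one le_rfl
        (by rw [e2]; ring) (by rw [e1]; ring) (by ring) (by ring)
  · obtain ⟨s, hs, hroot⟩ := exists_root hA hB hC hD
    obtain ⟨E, hE⟩ : ∃ E, E = B - A * s := ⟨_, rfl⟩
    obtain ⟨G, hG⟩ : ∃ G, G = C - E * s := ⟨_, rfl⟩
    have eB : B = E + A * s := by linarith
    have eC : C = G + E * s := by linarith
    have eD : D = s * G := by rw [hG, hE]; linarith
    have hq : 0 ≤ E ^ 2 - 4 * A * G := by
      have e : 0 ≤ (E ^ 2 - 4 * A * G) * (A * s ^ 2 - E * s + G) ^ 2 := by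
        refine hdisc.trans_eq ?_
        rw [eB, eC, eD]; ring
      by_cases h0 : A * s ^ 2 - E * s + G = 0
      · have : E ^ 2 - 4 * A * G = (2 * A * s - E) ^ 2 := by linear_combination (-4 * A) * h0
        rw [this]; positivity
      · exact nonneg_of_mul_nonneg_left e (by positivity)
    obtain ⟨y1, y2, e1, e2⟩ := quad_factor hA hq
    have hy : ∀ y, (y - s) * (y - y1) * (y - y2) = 0 → 0 ≤ y := by
      intro y h0
      by_contra hn
      push Not at hn
      have e : A * (-y) ^ 3 + B * (-y) ^ 2 + C * (-y) + D = 0 := by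
        rw [eB, eC, eD, e1, e2]; linear_combination (-A) * h0
      have hny : 0 < -y := by linarith
      have : 0 < A * (-y) ^ 3 + B * (-y) ^ 2 + C * (-y) + D := by positivity
      linarith
    exact tp_prod (k := A) (b1 := s) (a1 := 1) (b2 := y1) (a2 := 1) (b3 := y2) (a3 := 1)
        hA.le hs zero_le_one (hy y1 (by ring)) zero_le_one (hy y2 (by ring)) zero_le_one
        (by rw [eD, e2]; ring) (by rw [eC, e2, e1]; ring) (by rw [eB, e1]; ring) (by ring)

lemma hyp_P {p q : ℝ} (hp : 0 < p) (hq : 0 < q)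
    (h : ∀ z : ℂ, 1 + z + (p : ℂ) * z ^ 2 + (p : ℂ) ^ 2 * q * z ^ 3 = 0 → ∃ x : ℝ, z = x) :
    p ≤ 1 / 3 ∧ 0 ≤ F p q := by
  have hA : 0 < p ^ 2 * q := by positivity
  obtain ⟨A, eA⟩ : ∃ A, A = p ^ 2 * q := ⟨_, rfl⟩
  rw [← eA] at hA
  obtain ⟨s, hs, hroot⟩ := exists_root hA hp.le zero_le_one zero_le_one
  obtain ⟨E, hE⟩ : ∃ E, E = p - A * s := ⟨_, rfl⟩
  obtain ⟨G, hG⟩ : ∃ G, G = 1 - E * s := ⟨_, rfl⟩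
  have eB : p = E + A * s := by linarith
  have eC : 1 = G + E * s := by linarith
  have eD : 1 = s * G := by rw [hG, hE]; linarith
  have hd : 0 ≤ E ^ 2 - 4 * A * G := by
    apply quad_disc hA
    intro z hz
    apply h z
    have eB' : (p : ℂ) = E + A * s := by exact_mod_cast eB
    have eC' : (1 : ℂ) = G + E * s := by exact_mod_cast eC
    have eD' : (1 : ℂ) = s * G := by exact_mod_cast eD
    have eA' : (A : ℂ) = p ^ 2 * q := by exact_mod_cast eA
    linear_combination (z + s) * hz + eD' + z * eC' + z ^ 2 * eB' - z ^ 3 * eA'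
  constructor
  · have e : 1 ^ 2 - 3 * p * 1 = (G - E * s / 2) ^ 2 + 3 / 4 * s ^ 2 * (E ^ 2 - 4 * A * G) := by
      calc (1 : ℝ) ^ 2 - 3 * p * 1 = (G + E * s) ^ 2 - 3 * (E + A * s) * (s * G) := by
            rw [← eB, ← eC, ← eD]
        _ = _ := by ring
    have : 0 ≤ (G - E * s / 2) ^ 2 + 3 / 4 * s ^ 2 * (E ^ 2 - 4 * A * G) := by positivity
    linarith
  · have e : p ^ 2 * F p q = (E ^ 2 - 4 * A * G) * (A * s ^ 2 - E * s + G) ^ 2 := by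
      calc p ^ 2 * F p q = p ^ 2 * 1 ^ 2 - 4 * A * 1 ^ 3 - 4 * p ^ 3 * 1 + 18 * A * p * 1 * 1
              - 27 * A ^ 2 * 1 ^ 2 := by rw [eA]; unfold F; ring
        _ = (E + A * s) ^ 2 * (G + E * s) ^ 2 - 4 * A * (G + E * s) ^ 3
              - 4 * (E + A * s) ^ 3 * (s * G) + 18 * A * (E + A * s) * (G + E * s) * (s * G)
              - 27 * A ^ 2 * (s * G) ^ 2 := by rw [← eB, ← eC, ← eD]
        _ = _ := by ring
    have : 0 ≤ p ^ 2 * F p q := by rw [e]; positivity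
    exact nonneg_of_mul_nonneg_right this (by positivity)

lemma tp_minors {c : ℕ → ℝ} (h : IsTotallyPositive c) :
    (∀ k, 0 ≤ c k) ∧ c 0 * c 2 ≤ c 1 ^ 2 ∧ c 1 * c 3 ≤ c 2 ^ 2 ∧ c 0 * c 3 ≤ c 1 * c 2 ∧
    0 ≤ c 1 ^ 3 - 2 * c 0 * c 1 * c 2 + c 0 ^ 2 * c 3 := by
  refine ⟨fun k => ?_, ?_, ?_, ?_, ?_⟩
  · have := h 1 ![0] ![k] (Subsingleton.strictMono _) (Subsingleton.strictMono _)
    simpa using this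
  · have := h 2 ![0, 1] ![1, 2] (by decide) (by decide)
    simp [Matrix.det_fin_two] at this
    nlinarith
  · have := h 2 ![0, 1] ![2, 3] (by decide) (by decide)
    simp [Matrix.det_fin_two] at this
    nlinarith
  · have := h 2 ![0, 1] ![1, 3] (by decide) (by decide)
    simp [Matrix.det_fin_two] at this
    nlinarith
  · have := h 3 ![0, 1, 2] ![1, 2, 3] (by decide) (by decide)
    simp [Matrix.det_fin_three] at this
    nlinarith

end TPAux

/-- if both `P(x) = 1 + x + x²/a + x³/(a²b)` and `T(x) = x + x²/a + x³/(a²b)`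
have only real zeros, then for every totally positive sequence `(c_k)` the sequence
`(c_0, c_1, c_2/a, c_3/(a²b), 0, 0, …)` is totally positive. -/
theorem stmt_15 (a b : ℝ) (ha : 0 < a) (hb : 0 < b)
    (hP : ∀ z : ℂ, 1 + z + z ^ 2 / (a : ℂ) + z ^ 3 / ((a : ℂ) ^ 2 * (b : ℂ)) = 0 →
      ∃ x : ℝ, z = (x : ℂ))
    (hT : ∀ z : ℂ, z + z ^ 2 / (a : ℂ) + z ^ 3 / ((a : ℂ) ^ 2 * (b : ℂ)) = 0 →
      ∃ x : ℝ, z = (x : ℂ))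
    (c : ℕ → ℝ) (htp : IsTotallyPositive c) :
    IsTotallyPositive (fun k =>
      if k = 0 then c 0 else if k = 1 then c 1 else if k = 2 then c 2 / a
      else if k = 3 then c 3 / (a ^ 2 * b) else 0) := by
  have ha' : (a : ℂ) ≠ 0 := by exact_mod_cast ha.ne'
  have hb' : (b : ℂ) ≠ 0 := by exact_mod_cast hb.ne'
  obtain ⟨hp3, hF⟩ := TPAux.hyp_P (p := a⁻¹) (q := b⁻¹) (by positivity) (by positivity) (by
    intro z hz
    apply hP z
    rw [← hz]
    push_cast
    field_simp)
  have hq : b⁻¹ ≤ 1 / 4 := by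
    have := TPAux.quad_disc (A := (a ^ 2 * b)⁻¹) (E := a⁻¹) (G := 1) (by positivity) (by
      intro z hz
      apply hT z
      have e : z + z ^ 2 / (a : ℂ) + z ^ 3 / ((a : ℂ) ^ 2 * (b : ℂ)) =
          z * ((((a ^ 2 * b)⁻¹ : ℝ) : ℂ) * z ^ 2 + ((a⁻¹ : ℝ) : ℂ) * z + ((1 : ℝ) : ℂ)) := by
        push_cast
        field_simp
        ring
      rw [e, hz, mul_zero])
    have e : a⁻¹ ^ 2 - 4 * (a ^ 2 * b)⁻¹ * 1 = a⁻¹ ^ 2 * (1 - 4 * b⁻¹) := by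
      field_simp
    rw [e] at this
    have := nonneg_of_mul_nonneg_right this (by positivity)
    linarith
  obtain ⟨hc, m1, m2, m3, m4⟩ := TPAux.tp_minors htp
  have hd := TPAux.disc_nonneg (p := a⁻¹) (q := b⁻¹) (by positivity) hp3 (by positivity) hq hF
    (hc 0) (hc 1) (hc 2) (hc 3) m1 m2 m3 m4
  have e2 : c 2 * a⁻¹ = c 2 / a := by rw [div_eq_mul_inv]
  have e3 : c 3 * (a⁻¹ ^ 2 * b⁻¹) = c 3 / (a ^ 2 * b) := by field_simp
  rw [e2, e3] at hd
  exact TPAux.tp_cubic (hc 0) (hc 1) (div_nonneg (hc 2) ha.le)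
    (div_nonneg (hc 3) (by positivity)) hd
end

section
/- Let a > 0, b > 0, and let (q_k)_{k=2}^∞ be positive reals. Assume: (i) both F(y) = 1 + a·y·(1 + y + y^2/b) and t(y) = y + y^2 + y^3/b have only real (necessarily nonpositive) zeros, and (ii) the sequence (c_k)_{k=0}^∞ with c_0 = c_1 = 1 and c_k = 1/(q_2^{k−1} q_3^{k−2} ⋯ q_{k−1}^2 q_k) for k ≥ 2 is totally positive. Then the cubic F_q(y) = 1 + q_2·a·y·(1 + y + y^2/(q_3 b)) has only real (nonpositive) zeros. -/
def cD (A B : ℝ) : ℝ := A ^ 2 * B ^ 2 - 4 * A ^ 2 * B - 4 * A * B ^ 2 - 27 + 18 * A * B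

lemma cD_real {A B : ℝ} (hA : 0 < A) (hB : 0 < B) (hD : 0 ≤ cD A B) (z : ℂ)
    (hz : 1 + (A : ℂ) * z * (1 + z + z ^ 2 / (B : ℂ)) = 0) :
    ∃ x : ℝ, x ≤ 0 ∧ z = (x : ℂ) := by
  have hBc : (B : ℂ) ≠ 0 := by exact_mod_cast hB.ne'
  have hz2 : (B : ℂ) + A * B * z + A * B * z ^ 2 + A * z ^ 3 = 0 := by
    field_simp at hz
    linear_combination hz
  obtain ⟨u, v⟩ := z
  have hre := congrArg Complex.re hz2
  have him := congrArg Complex.im hz2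
  simp [pow_succ] at hre him
  have hv : v = 0 := by
    by_contra hv
    have e1 : B * (2 * u + 1) + (3 * u ^ 2 - v ^ 2) = 0 := by
      have : A * v * (B * (2 * u + 1) + (3 * u ^ 2 - v ^ 2)) = 0 := by linear_combination him
      exact (mul_eq_zero.mp this).resolve_left (mul_ne_zero hA.ne' hv)
    have e2 : B + A * (B * u + B * (u ^ 2 - v ^ 2) + (u ^ 3 - 3 * u * v ^ 2)) = 0 := by
      linear_combination hre
    obtain ⟨w, hw⟩ : ∃ w, w = -B - 2 * u := ⟨_, rfl⟩
    have f0 : B = -(2 * u + w) := by linear_combination hw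
    have f1 : B = u ^ 2 + v ^ 2 + 2 * u * w := by rw [hw]; linear_combination e1
    have f2 : B = - A * ((u ^ 2 + v ^ 2) * w) := by
      rw [hw]; linear_combination e2 - A * u * e1
    have key : A ^ 2 * cD A B * B ^ 2 = A ^ 4 * (-4 * v ^ 2 * ((u - w) ^ 2 + v ^ 2) ^ 2) := by
      have g : ∀ S P Q : ℝ, S = 2 * u + w → P = u ^ 2 + v ^ 2 + 2 * u * w →
          Q = (u ^ 2 + v ^ 2) * w →
          S ^ 2 * P ^ 2 - 4 * P ^ 3 - 4 * S ^ 3 * Q - 27 * Q ^ 2 + 18 * S * P * Q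
            = -4 * v ^ 2 * ((u - w) ^ 2 + v ^ 2) ^ 2 := by
        intro S P Q h1 h2 h3; subst h1 h2 h3; ring
      have h := g (-B) B (-B / A) (by linarith) f1 (by
        field_simp; linear_combination -f2)
      rw [← h]; unfold cD; field_simp
    have h1 : 0 ≤ A ^ 2 * cD A B * B ^ 2 := by positivity
    have h2 : 0 < A ^ 4 * (4 * v ^ 2 * ((u - w) ^ 2 + v ^ 2) ^ 2) := by
      have : 0 < v ^ 2 := by positivity
      positivity
    nlinarith
  subst hv
  refine ⟨u, ?_, rfl⟩
  by_contra hu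
  push Not at hu
  have : B + A * B * u + A * B * u ^ 2 + A * u ^ 3 = 0 := by linear_combination hre
  have : 0 < B + A * B * u + A * B * u ^ 2 + A * u ^ 3 := by positivity
  linarith

lemma quad_disc {p m n : ℝ} (hp : p ≠ 0)
    (h : ∀ z : ℂ, (p : ℂ) * z ^ 2 + m * z + n = 0 → ∃ x : ℝ, z = (x : ℂ)) :
    0 ≤ m ^ 2 - 4 * p * n := by
  by_contra hd
  push Not at hd
  have hpc : (p : ℂ) ≠ 0 := by exact_mod_cast hp
  obtain ⟨s, hs⟩ : ∃ s, s = Real.sqrt (4 * p * n - m ^ 2) := ⟨_, rfl⟩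
  have hspos : 0 < s := by rw [hs]; exact Real.sqrt_pos.mpr (by linarith)
  have hs2 : s ^ 2 = 4 * p * n - m ^ 2 := by rw [hs]; exact Real.sq_sqrt (by linarith)
  have hs2c : (s : ℂ) ^ 2 = 4 * p * n - m ^ 2 := by exact_mod_cast hs2
  obtain ⟨x, hx⟩ := h ((-m + s * Complex.I) / (2 * p)) (by
    field_simp
    linear_combination (s : ℂ) ^ 2 * Complex.I_sq - hs2c)
  have hx2 : -(m : ℂ) + s * Complex.I = x * (2 * p) := by
    rw [← hx]; field_simp
  have := congrArg Complex.im hx2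
  simp at this
  linarith

lemma cD_nonneg {a b : ℝ} (ha : 0 < a) (hb : 0 < b)
    (hF : ∀ z : ℂ, 1 + (a : ℂ) * z * (1 + z + z ^ 2 / (b : ℂ)) = 0 → ∃ x : ℝ, z = (x : ℂ)) :
    0 ≤ cD a b := by
  have hbc : (b : ℂ) ≠ 0 := by exact_mod_cast hb.ne'
  obtain ⟨r, hr⟩ : ∃ r : ℝ, 1 + a * r * (1 + r + r ^ 2 / b) = 0 := by
    open Polynomial in
    obtain ⟨z, hz⟩ := IsAlgClosed.exists_root
      (C ((a : ℂ) / b) * X ^ 3 + C (a : ℂ) * X ^ 2 + C (a : ℂ) * X + C 1) (by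
        rw [degree_cubic (div_ne_zero (by exact_mod_cast ha.ne') hbc)]; decide)
    have hz' : 1 + (a : ℂ) * z * (1 + z + z ^ 2 / (b : ℂ)) = 0 := by
      simp [Polynomial.IsRoot] at hz
      linear_combination hz
    obtain ⟨x, rfl⟩ := hF z hz'
    exact ⟨x, by exact_mod_cast hz'⟩
  obtain ⟨p, hp⟩ : ∃ p, p = a / b := ⟨_, rfl⟩
  have hp0 : 0 < p := by rw [hp]; positivity
  have hpb : p * b = a := by rw [hp]; field_simp
  obtain ⟨m, hm⟩ : ∃ m, m = a + p * r := ⟨_, rfl⟩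
  obtain ⟨n, hn⟩ : ∃ n, n = a + m * r := ⟨_, rfl⟩
  have h1 : 1 + n * r = 0 := by
    rw [hn, hm, hp]; linear_combination hr
  have hq := quad_disc (p := p) (m := m) (n := n) hp0.ne' (by
    intro z hz
    apply hF
    have e1 : (m : ℂ) = a + p * r := by exact_mod_cast hm
    have e2 : (n : ℂ) = a + m * r := by exact_mod_cast hn
    have e3 : (1 : ℂ) + n * r = 0 := by exact_mod_cast h1
    have e4 : (p : ℂ) = a / b := by rw [hp]; push_cast; rfl
    have : (1 : ℂ) + a * z + a * z ^ 2 + p * z ^ 3 = 0 := by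
      linear_combination (z - r) * hz + e3 - z ^ 2 * e1 - z * e2
    rw [e4] at this
    linear_combination this)
  have key : p ^ 2 * cD a b = (m ^ 2 - 4 * p * n) * (p * r ^ 2 + m * r + n) ^ 2 := by
    have g : ∀ k1 k2 k3 : ℝ, k1 = m - p * r → k2 = n - m * r → k3 = - n * r →
        k1 ^ 2 * k2 ^ 2 - 4 * p * k2 ^ 3 - 4 * k1 ^ 3 * k3 - 27 * p ^ 2 * k3 ^ 2
          + 18 * p * k1 * k2 * k3 = (m ^ 2 - 4 * p * n) * (p * r ^ 2 + m * r + n) ^ 2 := by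
      intro k1 k2 k3 e1 e2 e3; subst e1 e2 e3; ring
    rw [← g a a 1 (by linarith) (by linarith) (by linarith)]
    unfold cD
    rw [hp]; field_simp
  have : 0 ≤ p ^ 2 * cD a b := by rw [key]; positivity
  exact nonneg_of_mul_nonneg_right this (by positivity)

/-- Factorization of the discriminant. -/
lemma cD_factor {A B s : ℝ} (hB : B ≠ 0) (h1 : 1 - s ≠ 0) (h2 : 1 + s ≠ 0)
    (hA : A = 3 / ((1 - s) * (1 + s))) :
    cD A B = -27 * B ^ 2 * ((1 / B - (1 - 2 * s) / (3 * (1 - s) ^ 2)) *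
      (1 / B - (1 + 2 * s) / (3 * (1 + s) ^ 2))) := by
  rw [hA]; unfold cD; field_simp; ring

lemma three_le {a b : ℝ} (ha : 0 < a) (hb : 0 < b) (hD : 0 ≤ cD a b) : 3 ≤ a := by
  by_contra h
  push Not at h
  have e : 27 * cD a b = 4 * a * (a - 3) ^ 3 * b ^ 2 - (27 - (9 * a - 2 * a ^ 2) * b) ^ 2 := by
    unfold cD; ring
  have : 0 < 4 * a * (3 - a) ^ 3 * b ^ 2 := by
    have : 0 < 3 - a := by linarith
    positivity
  nlinarith [sq_nonneg (27 - (9 * a - 2 * a ^ 2) * b)]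

lemma s_exists {A : ℝ} (h3 : 3 ≤ A) (h4 : A < 4) :
    ∃ s, 0 ≤ s ∧ s < 1 / 2 ∧ A = 3 / ((1 - s) * (1 + s)) := by
  have h0 : 0 ≤ 1 - 3 / A := by
    rw [sub_nonneg, div_le_one (by linarith)]; exact h3
  have hs := Real.sq_sqrt h0
  have hs0 := Real.sqrt_nonneg (1 - 3 / A)
  have hq : 1 - 3 / A < 1 / 4 := by
    have : 3 / 4 < 3 / A := by gcongr
    linarith
  refine ⟨Real.sqrt (1 - 3 / A), hs0, by nlinarith, ?_⟩
  have : (1 - Real.sqrt (1 - 3 / A)) * (1 + Real.sqrt (1 - 3 / A)) = 3 / A := by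
    linear_combination -hs
  rw [this]; field_simp

lemma step {s t h : ℝ} (hs : 0 ≤ s) (hst : s ≤ t) (ht : t < 1 / 2)
    (hh : (1 + h) * ((1 - t) * (1 + t)) = (1 - s) * (1 + s)) :
    (1 - 2 * t) / (3 * (1 - t) ^ 2) ≤ (1 - h ^ 2) * ((1 - 2 * s) / (3 * (1 - s) ^ 2)) := by
  have p1 : 0 < 1 - t := by linarith
  have p2 : 0 < 1 - s := by linarith
  obtain ⟨u, hu⟩ : ∃ u, u = s / (1 - s) := ⟨_, rfl⟩
  obtain ⟨w, hw⟩ : ∃ w, w = t / (1 - t) := ⟨_, rfl⟩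
  have e1 : (1 - 2 * s) / (3 * (1 - s) ^ 2) = (1 - u ^ 2) / 3 := by rw [hu]; field_simp; ring
  have e2 : (1 - 2 * t) / (3 * (1 - t) ^ 2) = (1 - w ^ 2) / 3 := by rw [hw]; field_simp; ring
  rw [e1, e2]
  have hu0 : 0 ≤ u := by rw [hu]; positivity
  have hh' : h = (t - s) * (t + s) / ((1 - t) * (1 + t)) := by
    have : 0 < 1 + t := by linarith
    field_simp; linear_combination hh
  have hwu : w - u = (t - s) / ((1 - s) * (1 - t)) := by rw [hu, hw]; field_simp; ring
  have h0 : 0 ≤ h := by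
    rw [hh']
    have : 0 ≤ t - s := by linarith
    have : 0 ≤ t := by linarith
    positivity
  have hle : h ≤ w - u := by
    rw [hwu, hh', div_le_div_iff₀ (by nlinarith) (by positivity)]
    have q1 : 0 ≤ (t - s) * (1 - t) := mul_nonneg (by linarith) p1.le
    have : (t + s) * (1 - s) ≤ 1 + t := by nlinarith
    nlinarith
  nlinarith [mul_nonneg h0 hu0, mul_nonneg (mul_nonneg h0 hu0) (mul_nonneg h0 hu0)]

lemma main_ineq {a b x y : ℝ} (ha : 0 < a) (hb : 4 ≤ b) (hx : 1 ≤ x) (hy : 1 ≤ y)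
    (hxy : x * (2 - x) ≤ 1 / y) (hD : 0 ≤ cD a b) : 0 ≤ cD (x * a) (y * b) := by
  have h3 := three_le ha (by linarith) hD
  have hB : 4 ≤ y * b := by nlinarith
  rcases le_or_gt 4 (x * a) with h4 | h4
  · have : cD (x * a) (y * b)
      = (x * a) * (y * b) * ((x * a - 4) * (y * b - 4) + 2) - 27 := by unfold cD; ring
    rw [this]
    have k1 : 16 ≤ (x * a) * (y * b) := by nlinarith
    have k2 : 0 ≤ (x * a - 4) * (y * b - 4) := mul_nonneg (by linarith) (by linarith)
    nlinarith
  · have hxa : a ≤ x * a := by nlinarith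
    obtain ⟨s, hs0, hs1, hs⟩ := s_exists h3 (by linarith)
    obtain ⟨t, ht0, ht1, ht⟩ := s_exists (h3.trans hxa) h4
    have p1 : 0 < 1 - t := by linarith
    have p2 : 0 < 1 - s := by linarith
    have p3 : 0 < 1 + t := by linarith
    have p4 : 0 < 1 + s := by linarith
    have hb0 : 0 < b := by linarith
    have hy0 : 0 < y := by linarith
    have es : a * ((1 - s) * (1 + s)) = 3 := by rw [hs]; field_simp
    have et : x * a * ((1 - t) * (1 + t)) = 3 := by rw [ht]; field_simp
    have hh : (1 + (x - 1)) * ((1 - t) * (1 + t)) = (1 - s) * (1 + s) := by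
      have : a * (x * ((1 - t) * (1 + t))) = a * ((1 - s) * (1 + s)) := by linarith
      have := mul_left_cancel₀ ha.ne' this
      linarith
    have hst : s ≤ t := by
      have : 0 ≤ (x - 1) * ((1 - t) * (1 + t)) := by
        apply mul_nonneg (by linarith); positivity
      nlinarith
    have st := step hs0 hst ht1 hh
    have big : ∀ r : ℝ, 0 ≤ r → r < 1 / 2 → 1 / 4 ≤ (1 + 2 * r) / (3 * (1 + r) ^ 2) := by
      intro r h0 h1
      rw [div_le_div_iff₀ (by norm_num) (by positivity)]
      nlinarith
    have lowb : (1 - 2 * s) / (3 * (1 - s) ^ 2) ≤ 1 / b := by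
      by_contra hc
      push Not at hc
      have hf := cD_factor (A := a) (B := b) hb0.ne' p2.ne' p4.ne' hs
      have m1 : (1 - 2 * s) / (3 * (1 - s) ^ 2) ≤ (1 + 2 * s) / (3 * (1 + s) ^ 2) := by
        rw [div_le_div_iff₀ (by positivity) (by positivity)]
        nlinarith [pow_nonneg hs0 3]
      have : 0 < (1 / b - (1 - 2 * s) / (3 * (1 - s) ^ 2)) *
        (1 / b - (1 + 2 * s) / (3 * (1 + s) ^ 2)) :=
        mul_pos_of_neg_of_neg (by linarith) (by linarith)
      have : 0 < b ^ 2 * ((1 / b - (1 - 2 * s) / (3 * (1 - s) ^ 2)) *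
        (1 / b - (1 + 2 * s) / (3 * (1 + s) ^ 2))) := by positivity
      linarith
    have l1 : (1 - 2 * t) / (3 * (1 - t) ^ 2) ≤ 1 / (y * b) := by
      have hx2 : x < 4 / 3 := by nlinarith
      have n1 : 0 ≤ 1 - (x - 1) ^ 2 := by nlinarith
      calc _ ≤ _ := st
        _ ≤ (1 - (x - 1) ^ 2) * (1 / b) := by gcongr
        _ ≤ (1 / y) * (1 / b) := by
          apply mul_le_mul_of_nonneg_right _ (by positivity)
          linarith
        _ = 1 / (y * b) := by field_simp
    have l2 : 1 / (y * b) ≤ (1 + 2 * t) / (3 * (1 + t) ^ 2) := by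
      refine le_trans ?_ (big t ht0 ht1)
      exact one_div_le_one_div_of_le (by norm_num) hB
    rw [cD_factor (by positivity) p1.ne' p3.ne' ht]
    have : 0 ≤ (1 / (y * b) - (1 - 2 * t) / (3 * (1 - t) ^ 2)) *
        ((1 + 2 * t) / (3 * (1 + t) ^ 2) - 1 / (y * b)) :=
      mul_nonneg (by linarith) (by linarith)
    have : 0 ≤ (y * b) ^ 2 * ((1 / (y * b) - (1 - 2 * t) / (3 * (1 - t) ^ 2)) *
        ((1 + 2 * t) / (3 * (1 + t) ^ 2) - 1 / (y * b))) := by positivity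
    linarith

/-- if `F(y) = 1 + a·y·(1 + y + y²/b)` and `t(y) = y + y² + y³/b` have only
real zeros and the sequence `c_0 = c_1 = 1`, `c_k = 1/(q_2^{k-1} ⋯ q_k)` is totally
positive, then `F_q(y) = 1 + q_2·a·y·(1 + y + y²/(q_3 b))` has only real nonpositive
zeros. -/
theorem stmt_16 (a b : ℝ) (ha : 0 < a) (hb : 0 < b)
    (q : ℕ → ℝ) (hq : ∀ k, 2 ≤ k → 0 < q k)
    (hF : ∀ z : ℂ, 1 + (a : ℂ) * z * (1 + z + z ^ 2 / (b : ℂ)) = 0 → ∃ x : ℝ, z = (x : ℂ))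
    (ht : ∀ z : ℂ, z + z ^ 2 + z ^ 3 / (b : ℂ) = 0 → ∃ x : ℝ, z = (x : ℂ))
    (c : ℕ → ℝ) (hc0 : c 0 = 1) (hc1 : c 1 = 1)
    (hck : ∀ k, 2 ≤ k → c k = 1 / ∏ j ∈ Finset.Icc 2 k, q j ^ (k + 1 - j))
    (htp : IsTotallyPositive c) :
    ∀ z : ℂ, 1 + (q 2 : ℂ) * (a : ℂ) * z * (1 + z + z ^ 2 / ((q 3 : ℂ) * (b : ℂ))) = 0 →
      ∃ x : ℝ, x ≤ 0 ∧ z = (x : ℂ) := by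
  have hb4 : 4 ≤ b := by
    have hbc : (b : ℂ) ≠ 0 := by exact_mod_cast hb.ne'
    have := quad_disc (p := 1) (m := b) (n := b) one_ne_zero (by
      intro z hz
      apply ht
      push_cast at hz
      field_simp
      linear_combination z * hz)
    nlinarith
  have q2 := hq 2 le_rfl
  have q3 := hq 3 (by norm_num)
  have c2 : c 2 = 1 / q 2 := by
    rw [hck 2 le_rfl]; simp
  have c3 : c 3 = 1 / (q 2 ^ 2 * q 3) := by
    rw [hck 3 (by norm_num), show Finset.Icc 2 3 = {2, 3} from rfl]; simp
  have m1 := htp 2 ![0, 1] ![1, 2] (by decide) (by decide)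
  have m2 := htp 2 ![0, 1] ![2, 3] (by decide) (by decide)
  have m3 := htp 3 ![0, 1, 2] ![1, 2, 3] (by decide) (by decide)
  simp [Matrix.det_fin_two, hc0, hc1] at m1 m2
  simp [Matrix.det_fin_three, hc0, hc1] at m3
  rw [c2] at m1 m2 m3
  rw [c3] at m2 m3
  have hx : 1 ≤ q 2 := by
    rw [div_le_one q2] at m1; exact m1
  have hy : 1 ≤ q 3 := by
    have e : 1 / (q 2 ^ 2 * q 3) ≤ 1 / q 2 ^ 2 := by
      refine le_trans m2 (le_of_eq ?_)
      field_simp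
    have := le_of_one_div_le_one_div (by positivity) e
    have h2 : 0 < q 2 ^ 2 := by positivity
    nlinarith
  have hxy : q 2 * (2 - q 2) ≤ 1 / q 3 := by
    have e : 0 ≤ q 2 ^ 2 * (1 - 2 * (1 / q 2) + 1 / (q 2 ^ 2 * q 3)) := by
      apply mul_nonneg (by positivity); linarith
    have e2 : q 2 ^ 2 * (1 - 2 * (1 / q 2) + 1 / (q 2 ^ 2 * q 3))
      = q 2 ^ 2 - 2 * q 2 + 1 / q 3 := by field_simp
    rw [e2] at e
    linarith
  have hD := main_ineq ha hb4 hx hy hxy (cD_nonneg ha hb hF)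
  intro z hz
  exact cD_real (mul_pos q2 ha) (mul_pos q3 hb) hD z (by push_cast; exact hz)
end

section
/- Let (a_k)_{k=0}^∞ satisfy a_0 = a_1 = 1, a_k > 0 for all k, and a_{n−1}^2/(a_{n−2} a_n) ≥ 4 for every n ≥ 2 (so a_k = 1/(q_2^{k−1} q_3^{k−2} ⋯ q_{k−1}^2 q_k) for k ≥ 2 with every q_n ≥ 4). Then for every totally positive sequence (b_k)_{k=0}^∞, the sequence (a_k b_k)_{k=0}^∞ is totally positive; i.e., (a_k) is a TP_∞-preserver. -/
open Polynomial in
theorem tp_poly_step (P : ℝ[X]) (α β : ℝ) (hα : 0 ≤ α) (hβ : 0 ≤ β)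
    (h : IsTotallyPositive P.coeff) :
    IsTotallyPositive ((C β * X + C α) * P).coeff := by
  intro n i j hi hj
  set A : ℕ → Fin n → ℝ := fun u q => if u ≤ j q then P.coeff (j q - u) else 0 with hA
  set w : Fin 2 → ℝ := ![α, β] with hw
  have hwn : ∀ e, 0 ≤ w e := by
    intro e; fin_cases e <;> simp [hw, hα, hβ]
  have key : (Matrix.of fun p q : Fin n =>
      if i p ≤ j q then ((C β * X + C α) * P).coeff (j q - i p) else 0)
      = fun p => ∑ e : Fin 2, w e • A (i p + e) := by
    funext p q
    simp only [Matrix.of_apply, Fin.sum_univ_two, hw, hA, Pi.add_apply, Pi.smul_apply, smul_eq_mul]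
    simp only [Matrix.cons_val_zero, Matrix.cons_val_one, Fin.val_zero, Fin.val_one, add_zero]
    have e1 : (C β * X + C α) * P = C β * (X * P) + C α * P := by ring
    rw [e1, coeff_add, coeff_C_mul, coeff_C_mul]
    by_cases h1 : i p ≤ j q
    · by_cases h2 : i p + 1 ≤ j q
      · obtain ⟨d, hd⟩ := Nat.exists_eq_add_of_le h2
        have e2 : j q - i p = d + 1 := by omega
        have e3 : j q - (i p + 1) = d := by omega
        simp only [h1, h2, if_true, e2, e3, coeff_X_mul]; ring
      · have e2 : j q - i p = 0 := by omega
        simp [h1, h2, e2]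
    · have h2 : ¬ (i p + 1 ≤ j q) := by omega
      simp [h1, h2]
  rw [key]
  have e4 : Matrix.det (fun p => ∑ e : Fin 2, w e • A (i p + e))
      = ∑ r : Fin n → Fin 2, (∏ p, w (r p)) * Matrix.det (fun p => A (i p + r p)) := by
    have := (Matrix.detRowAlternating (R := ℝ) (n := Fin n)).toMultilinearMap.map_sum
      (fun p (e : Fin 2) => w e • A (i p + e))
    refine this.trans (Finset.sum_congr rfl fun r _ => ?_)
    exact (Matrix.detRowAlternating (R := ℝ) (n := Fin n)).toMultilinearMap.map_smul_univ
      (fun p => w (r p)) (fun p => A (i p + r p))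
  rw [e4]
  refine Finset.sum_nonneg fun r _ => mul_nonneg (Finset.prod_nonneg fun p _ => hwn _) ?_
  by_cases hs : StrictMono (fun p => i p + (r p : ℕ))
  · exact h n _ j hs hj
  · simp only [StrictMono, not_forall] at hs
    obtain ⟨p, p', hp, hne⟩ := hs
    have := hi hp
    have h1 := (r p).2
    have e5 : i p + (r p : ℕ) = i p' + (r p' : ℕ) := by omega
    refine le_of_eq (Eq.symm ?_)
    refine Matrix.det_zero_of_row_eq (ne_of_lt hp) ?_
    simp only [e5]

open Polynomial in
theorem tp_poly_C (l : ℝ) (hl : 0 ≤ l) : IsTotallyPositive (C l : ℝ[X]).coeff := by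
  intro n i j hi hj
  by_cases hij : i = j
  · subst hij
    have : (Matrix.of fun p q : Fin n => if i p ≤ i q then (C l : ℝ[X]).coeff (i q - i p) else 0)
        = Matrix.diagonal (fun _ => l) := by
      ext p q
      by_cases hpq : p = q
      · subst hpq; simp
      · have := hi.injective.ne hpq
        rw [Matrix.diagonal_apply_ne _ hpq]
        simp only [Matrix.of_apply, coeff_C]
        split_ifs <;> first | rfl | omega
    rw [this, Matrix.det_diagonal]
    exact Finset.prod_nonneg fun _ _ => hl
  · -- some row or column vanishes
    refine le_of_eq (Eq.symm ?_)
    by_cases hr : ∃ p, ∀ q, i p ≠ j q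
    · obtain ⟨p, hp⟩ := hr
      refine Matrix.det_eq_zero_of_row_eq_zero p fun q => ?_
      have := hp q
      simp only [Matrix.of_apply, coeff_C]
      split_ifs <;> first | rfl | omega
    · push Not at hr
      exfalso
      apply hij
      choose f hf using hr
      have hfm : StrictMono f := by
        intro p p' hpp
        have := hi hpp
        rw [hf, hf] at this
        exact hj.lt_iff_lt.1 this
      have : f = id := by
        have hb : Function.Bijective f := Finite.injective_iff_bijective.1 hfm.injective
        have e := Subsingleton.elim (StrictMono.orderIsoOfSurjective f hfm hb.2) (OrderIso.refl _)
        funext p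
        exact congrArg (fun g : Fin n ≃o Fin n => g p) e
      funext p
      rw [hf p, this]; rfl

open Polynomial in
theorem tp_of_splits (P : ℝ[X]) (hP : P.Splits) (hl : 0 ≤ P.leadingCoeff)
    (hr : ∀ r ∈ P.roots, r ≤ 0) : IsTotallyPositive P.coeff := by
  rw [hP.eq_prod_roots]
  generalize P.leadingCoeff = l at hl
  generalize P.roots = s at hr
  induction s using Multiset.induction_on with
  | empty => simpa using tp_poly_C l hl
  | cons r s ih =>
    have h1 := ih (fun x hx => hr x (Multiset.mem_cons_of_mem hx))
    have h2 := tp_poly_step _ (-r) 1 (by linarith [hr r (Multiset.mem_cons_self r s)]) zero_le_one h1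
    convert h2 using 2
    simp only [Multiset.map_cons, Multiset.prod_cons, map_one, map_neg]
    ring

open Polynomial in
theorem tp_X_pow (P : ℝ[X]) (m : ℕ) (h : IsTotallyPositive P.coeff) :
    IsTotallyPositive (X ^ m * P).coeff := by
  induction m with
  | zero => simpa using h
  | succ m ih =>
    have := tp_poly_step _ 0 1 le_rfl zero_le_one ih
    convert this using 2
    simp only [map_one, map_zero]; ring

theorem alt_sum (m : ℕ) : ∀ T : ℕ → ℝ, (∀ i, i ≤ m → 0 < T i) → (∀ i, i < m → T (i+1) < T i) →
    0 < ∑ i ∈ Finset.range (m+1), (-1)^i * T i ∧ ∑ i ∈ Finset.range (m+1), (-1)^i * T i ≤ T 0 := by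
  induction m with
  | zero => intro T hT _; simpa using hT 0 le_rfl
  | succ m ih =>
    intro T hT hd
    have := ih (fun i => T (i+1)) (fun i hi => hT _ (by omega)) (fun i hi => hd _ (by omega))
    rw [Finset.sum_range_succ']
    have e : ∑ k ∈ Finset.range (m + 1), (-1:ℝ) ^ (k + 1) * T (k + 1)
      = - ∑ k ∈ Finset.range (m + 1), (-1:ℝ) ^ k * T (k + 1) := by
      rw [← Finset.sum_neg_distrib]
      exact Finset.sum_congr rfl fun k _ => by ring
    rw [e]
    have h0 := hd 0 (by omega)
    simp only [zero_add] at this h0 ⊢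
    constructor <;> simp <;> linarith [this.1, this.2]

theorem alt_sum_le (m : ℕ) (T : ℕ → ℝ) (h0 : 0 ≤ T 0) (hT : ∀ i, i < m → 0 < T i)
    (hd : ∀ i, i + 1 < m → T (i+1) < T i) :
    ∑ i ∈ Finset.range m, (-1)^i * T i ≤ T 0 := by
  cases m with
  | zero => simpa using h0
  | succ m => exact (alt_sum m T (fun i hi => hT i (by omega)) (fun i hi => hd i (by omega))).2

theorem alt_sum_lt (m : ℕ) (hm : 2 ≤ m) (T : ℕ → ℝ) (hT : ∀ i, i < m → 0 < T i)
    (hd : ∀ i, i + 1 < m → T (i+1) < T i) :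
    ∑ i ∈ Finset.range m, (-1)^i * T i < T 0 := by
  obtain ⟨m, rfl⟩ := Nat.exists_eq_add_of_le' hm
  have := (alt_sum m (fun i => T (i+1)) (fun i hi => hT _ (by omega)) (fun i hi => hd _ (by omega))).1
  rw [Finset.sum_range_succ']
  have e : ∑ k ∈ Finset.range (m + 1), (-1:ℝ) ^ (k + 1) * T (k + 1)
      = - ∑ k ∈ Finset.range (m + 1), (-1:ℝ) ^ k * T (k + 1) := by
    rw [← Finset.sum_neg_distrib]
    exact Finset.sum_congr rfl fun k _ => by ring
  rw [e]
  simp; linarith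

/-- Domination of the middle term in an alternating sum; `n = k + m`, `k ≥ 1`. -/
theorem alt_dom (k m : ℕ) (T : ℕ → ℝ) (hT : ∀ i, i ≤ k + 1 + m → 0 < T i)
    (hup : ∀ i, i < k + 1 → T i < T (i+1)) (hdn : ∀ i, k + 1 ≤ i → i < k + 1 + m → T (i+1) < T i)
    (h1 : 2 * T k ≤ T (k+1)) (h2 : 0 < m → 2 * T (k+2) ≤ T (k+1))
    (h3 : m = 0 ∨ 2 ≤ m ∨ 1 ≤ k) :
    0 < (-1)^(k+1) * ∑ i ∈ Finset.range (k + 1 + m + 1), (-1)^i * T i := by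
  have e : (-1)^(k+1) * ∑ i ∈ Finset.range (k + 1 + m + 1), (-1)^i * T i
      = T (k+1) - ∑ i ∈ Finset.range (k+1), (-1)^i * T (k - i)
        - ∑ i ∈ Finset.range m, (-1)^i * T (k + 2 + i) := by
    have e1 : k + 1 + m + 1 = (k + 1) + (1 + m) := by ring
    rw [e1, Finset.sum_range_add _ (k+1) (1+m), Finset.sum_range_add _ 1 m]
    rw [← Finset.sum_range_reflect (fun i => (-1)^i * T i) (k+1)]
    have hsq : ∀ a : ℕ, ((-1:ℝ)^a * (-1)^a) = 1 := fun a => by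
      rw [← mul_pow]; simp
    rw [mul_add, mul_add, Finset.mul_sum, Finset.mul_sum, Finset.mul_sum]
    have s1 : ∑ i ∈ Finset.range (k + 1), (-1:ℝ) ^ (k + 1) * ((-1) ^ (k + 1 - 1 - i) * T (k + 1 - 1 - i))
        = - ∑ i ∈ Finset.range (k+1), (-1)^i * T (k - i) := by
      rw [← Finset.sum_neg_distrib]
      refine Finset.sum_congr rfl fun i hi => ?_
      rw [Finset.mem_range] at hi
      obtain ⟨d, rfl⟩ := Nat.exists_eq_add_of_le (Nat.lt_succ_iff.1 hi)
      have : i + d + 1 - 1 - i = d := by omega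
      have h' : i + d - i = d := by omega
      rw [this, h']
      have := hsq d
      calc _ = -((-1)^i * ((-1)^d * (-1)^d) * T d) := by ring
        _ = _ := by rw [this]; ring
    have s2 : ∑ x ∈ Finset.range m, (-1:ℝ) ^ (k + 1) * ((-1) ^ (k + 1 + (1 + x)) * T (k + 1 + (1 + x)))
        = - ∑ i ∈ Finset.range m, (-1)^i * T (k + 2 + i) := by
      rw [← Finset.sum_neg_distrib]
      refine Finset.sum_congr rfl fun i hi => ?_
      have : k + 1 + (1 + i) = k + 2 + i := by ring
      rw [this]
      have := hsq k
      calc _ = -(((-1)^k * (-1)^k) * (-1)^i * T (k+2+i)) := by ring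
        _ = _ := by rw [this]; ring
    rw [s1, s2]
    have := hsq (k+1)
    simp only [Finset.sum_range_one, add_zero]
    rw [← mul_assoc, this]; ring
  rw [e]
  have hTk := hT k (by omega)
  have hL : ∑ i ∈ Finset.range (k+1), (-1)^i * T (k - i) ≤ T k :=
    alt_sum_le (k+1) (fun i => T (k - i)) (by simpa using hTk.le) (fun i hi => hT _ (by omega))
      (fun i hi => by
        have := hup (k - (i+1)) (by omega)
        have e : k - (i+1) + 1 = k - i := by omega
        rwa [e] at this)
  rcases Nat.eq_zero_or_pos m with hm | hm
  · subst hm; simp; linarith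
  have h2 := h2 hm
  have dn : ∀ i, i + 1 < m → T (k + 2 + (i+1)) < T (k + 2 + i) := fun i hi =>
    hdn (k+2+i) (by omega) (by omega)
  have pn : ∀ i, i < m → 0 < T (k + 2 + i) := fun i hi => hT _ (by omega)
  have hU : ∑ i ∈ Finset.range m, (-1)^i * T (k + 2 + i) ≤ T (k+2) :=
    alt_sum_le m (fun i => T (k + 2 + i)) (hT (k+2) (by omega)).le pn dn
  rcases h3 with h3 | h3 | h3
  · omega
  · have : ∑ i ∈ Finset.range m, (-1)^i * T (k + 2 + i) < T (k+2) :=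
      alt_sum_lt m h3 (fun i => T (k + 2 + i)) pn dn
    linarith
  · have : ∑ i ∈ Finset.range (k+1), (-1)^i * T (k - i) < T k :=
      alt_sum_lt (k+1) (by omega) (fun i => T (k - i)) (fun i hi => hT _ (by omega))
      (fun i hi => by
        have := hup (k - (i+1)) (by omega)
        have e : k - (i+1) + 1 = k - i := by omega
        rwa [e] at this)
    linarith

open Polynomial in
theorem hutch_tp (c : ℕ → ℝ) (n : ℕ) (hc : ∀ k, k ≤ n → 0 < c k)
    (hq : ∀ k, k + 2 ≤ n → 4 * (c k * c (k+2)) ≤ c (k+1) ^ 2) :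
    IsTotallyPositive (∑ k ∈ Finset.range (n+1), C (c k) * X ^ k).coeff := by
  set P : ℝ[X] := ∑ k ∈ Finset.range (n+1), C (c k) * X ^ k with hP
  have hcoeff : ∀ k, P.coeff k = if k ≤ n then c k else 0 := by
    intro k
    simp [hP, finsetSum_coeff, coeff_C_mul, coeff_X_pow, Nat.lt_succ_iff]
  have hdeg : P.natDegree = n := by
    apply le_antisymm
    · rw [natDegree_le_iff_coeff_eq_zero]
      intro k hk
      rw [hcoeff, if_neg (by omega)]
    · apply le_natDegree_of_ne_zero
      rw [hcoeff, if_pos le_rfl]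
      exact (hc n le_rfl).ne'
  have heval : ∀ x, P.eval x = ∑ k ∈ Finset.range (n+1), c k * x ^ k := by
    intro x; simp [hP, eval_finsetSum]
  have hP0 : P ≠ 0 := by
    intro h
    have := hcoeff 0
    rw [h] at this
    simp at this
    exact (hc 0 (by omega)).ne this
  refine tp_of_splits P ?_ ?_ ?_
  · rcases (by omega : n ≤ 1 ∨ n = 2 ∨ 3 ≤ n) with h | h | h
    · exact Splits.of_natDegree_le_one (by omega)
    · subst h
      have h0 := hc 0 (by omega)
      have h2 := hc 2 (by omega)
      have hd := hq 0 (by omega)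
      simp only [zero_add] at hd
      have hs : √(c 1 ^ 2 - 4 * (c 0 * c 2)) ^ 2 = c 1 ^ 2 - 4 * (c 0 * c 2) :=
        Real.sq_sqrt (by linarith)
      generalize √(c 1 ^ 2 - 4 * (c 0 * c 2)) = s at hs
      refine Splits.of_natDegree_eq_two (x := (-(c 1) + s) / (2 * c 2)) hdeg ?_
      rw [heval]
      simp only [Finset.sum_range_succ, Finset.sum_range_zero]
      field_simp
      linear_combination hs
    · -- the ratios
      set r : ℕ → ℝ := fun k => c k / c (k+1) with hr
      have hrpos : ∀ k, k + 1 ≤ n → 0 < r k := fun k hk =>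
        div_pos (hc _ (by omega)) (hc _ hk)
      have hr4 : ∀ k, k + 2 ≤ n → 4 * r k ≤ r (k+1) := by
        intro k hk
        have h1 := hc (k+1) (by omega)
        have h2 := hc (k+2) (by omega)
        have := hq k hk
        simp only [hr]
        rw [← mul_div_assoc, div_le_div_iff₀ h1 h2]
        nlinarith
      have hrmono : ∀ d k, k + d + 1 ≤ n → r k ≤ r (k+d) := by
        intro d
        induction d with
        | zero => intro k _; simp
        | succ d ih =>
          intro k hk
          have h1 := ih k (by omega)
          have h2 := hr4 (k+d) (by omega)
          have h3 := hrpos (k+d) (by omega)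
          have e : k + (d+1) = k + d + 1 := by ring
          rw [e]; linarith
      have hrm : ∀ k l, k ≤ l → l + 1 ≤ n → r k ≤ r l := by
        intro k l hkl hl
        obtain ⟨d, rfl⟩ := Nat.exists_eq_add_of_le hkl
        exact hrmono d k hl
      -- the sample points
      set x : ℕ → ℝ := fun k => if k = 0 then 0 else 2 * r (k-1) with hx
      have hx0 : x 0 = 0 := by simp [hx]
      have hxs : ∀ k, x (k+1) = 2 * r k := by intro k; simp [hx]
      have hxlt : ∀ k, k < n → x k < x (k+1) := by
        intro k hk
        rw [hxs]
        cases k with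
        | zero => rw [hx0]; linarith [hrpos 0 (by omega)]
        | succ k =>
          rw [hxs]
          linarith [hr4 k (by omega), hrpos k (by omega)]
      have hsign : ∀ k, k ≤ n → 0 < (-1)^k * P.eval (-(x k)) := by
        intro k hk
        cases k with
        | zero =>
          rw [hx0, heval, Finset.sum_range_succ']
          simpa using hc 0 (by omega)
        | succ k =>
          obtain ⟨m, hm⟩ := Nat.exists_eq_add_of_le hk
          have hxp : 0 < x (k+1) := by rw [hxs]; linarith [hrpos k (by omega)]
          have e : P.eval (-(x (k+1))) = ∑ i ∈ Finset.range (k+1+m+1), (-1)^i * (c i * x (k+1) ^ i) := by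
            rw [heval, hm]
            refine Finset.sum_congr rfl fun i _ => ?_
            rw [neg_pow]; ring
          have hcr : ∀ i, i + 1 ≤ n → c i = r i * c (i+1) := by
            intro i hi
            have := hc (i+1) hi
            simp only [hr]; field_simp
          have hpc : ∀ i, i + 1 ≤ n → 0 < c (i+1) * x (k+1) ^ i := fun i hi =>
            mul_pos (hc _ hi) (pow_pos hxp _)
          rw [e]
          refine alt_dom k m (fun i => c i * x (k+1) ^ i) ?_ ?_ ?_ ?_ ?_ (by omega)
          · intro i hi
            exact mul_pos (hc _ (by omega)) (pow_pos hxp _)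
          · intro i hi
            have h1 := hrm i k (by omega) (by omega)
            have h2 := hrpos k (by omega)
            have h3 := hpc i (by omega)
            have h4 : r i < x (k+1) := by rw [hxs]; linarith
            show c i * _ < c (i+1) * _
            rw [hcr i (by omega), pow_succ]
            have := mul_lt_mul_of_pos_right h4 h3
            linarith
          · intro i hi hi2
            have h1 := hrm (k+1) i hi (by omega)
            have h2 := hrpos k (by omega)
            have h3 := hpc i (by omega)
            have h5 := hr4 k (by omega)
            have h4 : x (k+1) < r i := by rw [hxs]; linarith
            show c (i+1) * _ < c i * _
            rw [hcr i (by omega), pow_succ]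
            have := mul_lt_mul_of_pos_right h4 h3
            linarith
          · show 2 * (c k * _) ≤ c (k+1) * _
            rw [hcr k (by omega), pow_succ]
            have : x (k+1) * (c (k+1) * x (k+1) ^ k) = 2 * r k * (c (k+1) * x (k+1) ^ k) := by
              rw [← hxs]
            linarith
          · intro hm0
            show 2 * (c (k+1+1) * _) ≤ c (k+1) * _
            rw [hcr (k+1) (by omega), pow_succ _ (k+1)]
            have h3 := hpc (k+1) (by omega)
            have h5 := hr4 k (by omega)
            have h4 : 2 * x (k+1) ≤ r (k+1) := by rw [hxs]; linarith
            have := mul_le_mul_of_nonneg_right h4 h3.le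
            linarith
      -- intermediate value theorem
      have hroot : ∀ k : Fin n, ∃ y, x k < y ∧ y < x (k+1) ∧ P.eval (-y) = 0 := by
        intro k
        have h1 := hsign k k.2.le
        have h2 := hsign (k+1) k.2
        have hlt := hxlt k k.2
        have hcont : ContinuousOn (fun y => (-1)^(k:ℕ) * P.eval (-y)) (Set.Icc (x k) (x (k+1))) := by
          apply Continuous.continuousOn
          exact continuous_const.mul (P.continuous.comp continuous_neg)
        have h2' : (-1)^(k:ℕ) * P.eval (-(x (k+1))) < 0 := by
          rw [pow_succ] at h2; linarith
        obtain ⟨y, hy, hy0⟩ := intermediate_value_Ioo' hlt.le hcont ⟨h2', h1⟩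
        refine ⟨y, hy.1, hy.2, ?_⟩
        simpa using hy0
      choose y hy1 hy2 hy3 using hroot
      have hxm : ∀ d k, k + d ≤ n → x k ≤ x (k+d) := by
        intro d
        induction d with
        | zero => intro k _; simp
        | succ d ih => intro k hk; exact (ih k (by omega)).trans (hxlt (k+d) (by omega)).le
      have hym : StrictMono y := by
        intro a b hab
        have hab' : (a:ℕ) + 1 ≤ b := hab
        obtain ⟨d, hd⟩ := Nat.exists_eq_add_of_le hab'
        have := hxm d (a+1) (by have := b.2; omega)
        rw [← hd] at this
        linarith [hy2 a, hy1 b]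
      rw [splits_iff_card_roots]
      apply le_antisymm (card_roots' P)
      rw [hdeg]
      have hsub : (Finset.univ.image fun k => -(y k)) ⊆ P.roots.toFinset := by
        intro z hz
        simp only [Finset.mem_image, Finset.mem_univ, true_and] at hz
        obtain ⟨k, rfl⟩ := hz
        rw [Multiset.mem_toFinset, mem_roots hP0]
        exact hy3 k
      have hcard := Finset.card_le_card hsub
      rw [Finset.card_image_of_injective _ (fun a b hab => hym.injective (neg_injective hab)),
        Finset.card_univ, Fintype.card_fin] at hcard
      exact hcard.trans (Multiset.toFinset_card_le _)
  · rw [leadingCoeff, hdeg, hcoeff, if_pos le_rfl]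
    exact (hc n le_rfl).le
  · intro z hz
    by_contra hz0
    push Not at hz0
    rw [mem_roots hP0, IsRoot.def, heval] at hz
    have : 0 < ∑ k ∈ Finset.range (n+1), c k * z ^ k :=
      Finset.sum_pos (fun k hk => mul_pos (hc k (by simpa [Nat.lt_succ_iff] using hk)) (pow_pos hz0 _))
        ⟨0, by simp⟩
    linarith

theorem tp_nonneg (b : ℕ → ℝ) (hb : IsTotallyPositive b) (k : ℕ) : 0 ≤ b k := by
  have := hb 1 (fun _ => 0) (fun _ => k) (Subsingleton.strictMono _) (Subsingleton.strictMono _)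
  simpa using this

theorem tp_two (b : ℕ → ℝ) (hb : IsTotallyPositive b) (i k d : ℕ) (hik : i < k) (hd : 0 < d) :
    b i * b (k + d) ≤ b k * b (i + d) := by
  have := hb 2 ![0, k - i] ![k, k + d]
    (by rw [Fin.strictMono_iff_lt_succ]; intro p; fin_cases p; simp; omega)
    (by rw [Fin.strictMono_iff_lt_succ]; intro p; fin_cases p; simp; omega)
  rw [Matrix.det_fin_two] at this
  have e1 : k - (k - i) = i := by omega
  have e2 : k + d - (k - i) = i + d := by omega
  have e3 : k - i ≤ k + d := by omega
  simp [e1, e2, e3] at this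
  linarith

open Polynomial in
theorem tp_of_all_trunc (c : ℕ → ℝ)
    (h : ∀ N : ℕ, ∃ P : ℝ[X], IsTotallyPositive P.coeff ∧ ∀ k, k ≤ N → P.coeff k = c k) :
    IsTotallyPositive c := by
  intro n i j hi hj
  obtain ⟨P, hP, hc⟩ := h (∑ q, j q)
  have := hP n i j hi hj
  convert this using 6 with p q
  refine (hc _ ?_).symm
  exact (Nat.sub_le _ _).trans (Finset.single_le_sum (f := j) (fun _ _ => Nat.zero_le _) (Finset.mem_univ q))

/-- Sokal's example via Hutchinson: if `a_0 = a_1 = 1`, `a_k > 0` and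
`a_{n-1}²/(a_{n-2} a_n) ≥ 4` for all `n ≥ 2`, then `a` is a TP_∞-preserver. -/
theorem stmt_17 (a : ℕ → ℝ) (h0 : a 0 = 1) (h1 : a 1 = 1) (hpos : ∀ k, 0 < a k)
    (hratio : ∀ n, 2 ≤ n → 4 ≤ a (n - 1) ^ 2 / (a (n - 2) * a n)) :
    IsTPPreserver a := by
  classical
  intro b hb
  have hbn := tp_nonneg b hb
  have ha : ∀ k, 4 * (a k * a (k+2)) ≤ a (k+1) ^ 2 := by
    intro k
    have := hratio (k+2) (by omega)
    rwa [le_div_iff₀ (mul_pos (hpos _) (hpos _))] at this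
  have hcq : ∀ k, 4 * ((a k * b k) * (a (k+2) * b (k+2))) ≤ (a (k+1) * b (k+1)) ^ 2 := by
    intro k
    have h2 := tp_two b hb k (k+1) 1 (by omega) (by omega)
    have h3 := ha k
    have h4 : 0 ≤ b k * b (k+2) := mul_nonneg (hbn _) (hbn _)
    have h5 : 0 ≤ a (k+1) ^ 2 := sq_nonneg _
    calc 4 * ((a k * b k) * (a (k+2) * b (k+2))) = (4 * (a k * a (k+2))) * (b k * b (k+2)) := by ring
      _ ≤ a (k+1) ^ 2 * (b (k+1) * b (k+1)) := mul_le_mul h3 h2 h4 h5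
      _ = _ := by ring
  have hbetween : ∀ i k l, i < k → k < l → 0 < b i → 0 < b l → 0 < b k := by
    intro i k l hik hkl hi hl
    obtain ⟨d, rfl⟩ := Nat.exists_eq_add_of_le hkl.le
    have h2 := tp_two b hb i k d hik (by omega)
    have h3 := mul_pos hi hl
    rcases (hbn k).lt_or_eq with h | h
    · exact h
    · rw [← h] at h2; linarith
  apply tp_of_all_trunc
  intro N
  by_cases hz : ∀ k, k ≤ N → b k = 0
  · refine ⟨Polynomial.C 0, tp_poly_C 0 le_rfl, fun k hk => ?_⟩
    simp [hz k hk]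
  push Not at hz
  obtain ⟨k0, hk0, hbk0⟩ := hz
  have hex : ∃ k, 0 < b k := ⟨k0, lt_of_le_of_ne (hbn _) (Ne.symm hbk0)⟩
  set m := Nat.find hex with hm
  have hbm : 0 < b m := Nat.find_spec hex
  have hlow : ∀ k, k < m → b k = 0 := fun k hk =>
    le_antisymm (not_lt.1 (Nat.find_min hex hk)) (hbn k)
  have hmN : m ≤ N := (Nat.find_min' hex (lt_of_le_of_ne (hbn _) (Ne.symm hbk0))).trans hk0
  set M := Nat.findGreatest (fun k => 0 < b k) N with hM
  have hmM : m ≤ M := Nat.le_findGreatest hmN hbm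
  have hbM : 0 < b M := Nat.findGreatest_spec (P := fun k => 0 < b k) hmN hbm
  have hhigh : ∀ k, M < k → k ≤ N → b k = 0 := fun k hk hkN =>
    le_antisymm (not_lt.1 (Nat.findGreatest_is_greatest hk hkN)) (hbn k)
  obtain ⟨n, hn⟩ := Nat.exists_eq_add_of_le hmM
  refine ⟨_, tp_X_pow _ m (hutch_tp (fun k => a (m+k) * b (m+k)) n ?_ ?_), ?_⟩
  · intro k hk
    refine mul_pos (hpos _) ?_
    rcases Nat.eq_zero_or_pos k with h | h
    · subst h; exact hbm
    · rcases hk.lt_or_eq with h' | h'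
      · exact hbetween m (m+k) M (by omega) (by omega) hbm hbM
      · rw [h', ← hn]; exact hbM
  · intro k _
    exact hcq (m+k)
  · intro k hk
    rw [Polynomial.coeff_X_pow_mul']
    split_ifs with h
    · obtain ⟨d, rfl⟩ := Nat.exists_eq_add_of_le h
      simp only [Polynomial.finsetSum_coeff, Polynomial.coeff_C_mul, Polynomial.coeff_X_pow,
        Nat.add_sub_cancel_left, mul_ite, mul_one, mul_zero, Finset.sum_ite_eq, Finset.mem_range]
      split_ifs with h'
      · rfl
      · rw [hhigh (m+d) (by omega) hk, mul_zero]
    · rw [hlow k (by omega), mul_zero]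
end

section
/- The sequence (b_k)_{k=0}^∞ with b_k = 1 − 2^{−(k+1)} (the Taylor coefficient sequence of f(z) = 1/((1−z)(2−z))) is totally positive, but the sequence (k·b_k)_{k=0}^∞ = (k(1 − 2^{−(k+1)}))_{k=0}^∞ is not totally positive. Consequently, the multiplier sequence (k)_{k=0}^∞ is not a TP_∞-preserver. -/
/-- All minors of an infinite matrix are nonnegative. -/
def MatTP (M : ℕ → ℕ → ℝ) : Prop :=
  ∀ (n : ℕ) (i j : Fin n → ℕ), StrictMono i → StrictMono j →
    0 ≤ (Matrix.of fun p q : Fin n => M (i p) (j q)).det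

lemma rec_step (M N : ℕ → ℕ → ℝ) (c : ℝ)
    (hs : ∀ r j, N r (j + 1) = c * N r j + M r (j + 1)) (r j d : ℕ) :
    N r (j + d) = c ^ d * N r j + ∑ l ∈ Finset.Ioc j (j + d), c ^ (j + d - l) * M r l := by
  induction d with
  | zero => simp
  | succ d ih =>
    rw [← add_assoc, hs, ih, ← Finset.insert_Ioc_right_eq_Ioc_add_one (by omega),
      Finset.sum_insert (by simp), mul_add, Finset.mul_sum]
    have : ∀ l ∈ Finset.Ioc j (j + d), c * (c ^ (j + d - l) * M r l)
        = c ^ (j + d + 1 - l) * M r l := by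
      intro l hl
      rw [Finset.mem_Ioc] at hl
      rw [show j + d + 1 - l = (j + d - l) + 1 by omega]
      ring
    rw [Finset.sum_congr rfl this]
    simp
    ring

lemma rec_zero (M N : ℕ → ℕ → ℝ) (c : ℝ) (h0 : ∀ r, N r 0 = M r 0)
    (hs : ∀ r j, N r (j + 1) = c * N r j + M r (j + 1)) (r j : ℕ) :
    N r j = ∑ l ∈ Finset.Iic j, c ^ (j - l) * M r l := by
  have := rec_step M N c hs r 0 j
  rw [zero_add] at this
  rw [this, h0]
  have h : Finset.Iic j = insert 0 (Finset.Ioc 0 j) := by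
    ext x; simp only [Finset.mem_Iic, Finset.mem_insert, Finset.mem_Ioc]; omega
  rw [h, Finset.sum_insert (by simp)]
  simp

lemma matTP_step (M N : ℕ → ℕ → ℝ) (c : ℝ) (hc : 0 ≤ c) (h0 : ∀ r, N r 0 = M r 0)
    (hs : ∀ r j, N r (j + 1) = c * N r j + M r (j + 1)) (hM : MatTP M) : MatTP N := by
  intro n i j hi hj
  rcases n with _ | n
  · simp
  let S : Fin (n + 1) → Finset ℕ :=
    Fin.cases (Finset.Iic (j 0)) (fun q => Finset.Ioc (j q.castSucc) (j q.succ))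
  have key : (Matrix.of fun p q : Fin (n + 1) => N (i p) (j q)).det =
      (Matrix.of fun p q : Fin (n + 1) => ∑ l ∈ S q, c ^ (j q - l) * M (i p) l).det := by
    apply Matrix.det_eq_of_forall_col_eq_smul_add_pred
      (fun q : Fin n => c ^ (j q.succ - j q.castSucc))
    · intro p
      simp only [Matrix.of_apply, S, Fin.cases_zero]
      exact rec_zero M N c h0 hs _ _
    · intro p q
      simp only [Matrix.of_apply, S, Fin.cases_succ]
      have hlt : j q.castSucc < j q.succ := hj Fin.castSucc_lt_succ
      have := rec_step M N c hs (i p) (j q.castSucc) (j q.succ - j q.castSucc)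
      rw [Nat.add_sub_cancel' hlt.le] at this
      rw [this, add_comm]
  rw [key, ← Matrix.det_transpose]
  have e : (Matrix.of fun p q : Fin (n + 1) => ∑ l ∈ S q, c ^ (j q - l) * M (i p) l).transpose
      = fun q => ∑ l ∈ S q, c ^ (j q - l) • (fun p => M (i p) l) := by
    ext q p
    simp [Matrix.transpose_apply, Finset.sum_apply]
  rw [e]
  have := (Matrix.detRowAlternating (n := Fin (n + 1)) (R := ℝ)).toMultilinearMap.map_sum_finset
    (fun q l => c ^ (j q - l) • (fun p => M (i p) l)) S
  change 0 ≤ (Matrix.detRowAlternating (n := Fin (n + 1)) (R := ℝ)).toMultilinearMap _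
  rw [this]
  apply Finset.sum_nonneg
  intro l hl
  rw [Fintype.mem_piFinset] at hl
  rw [MultilinearMap.map_smul_univ]
  refine smul_nonneg (Finset.prod_nonneg fun q _ => pow_nonneg hc _) ?_
  have hle : ∀ q, l q ≤ j q := by
    intro q
    have := hl q
    induction q using Fin.cases with
    | zero => simpa [S] using this
    | succ q => simp [S] at this; exact this.2
  have hmono : StrictMono l := by
    rw [Fin.strictMono_iff_lt_succ]
    intro q
    have := hl q.succ
    simp [S] at this
    exact (hle _).trans_lt this.1
  have h := hM (n + 1) i l hi hmono
  rw [← Matrix.det_transpose] at h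
  exact h

lemma matTP_diag : MatTP (fun r j => if r = j then (1 / 2 : ℝ) else 0) := by
  intro n i j hi hj
  by_cases h : ∀ p, i p ∈ Set.range j
  · have hij : i = j := by
      have hsub : Finset.univ.image i ⊆ Finset.univ.image j := by
        intro x hx
        simp only [Finset.mem_image, Finset.mem_univ, true_and] at hx ⊢
        obtain ⟨p, rfl⟩ := hx
        exact h p
      have heq := Finset.eq_of_subset_of_card_le hsub (by
        rw [Finset.card_image_of_injective _ hi.injective,
          Finset.card_image_of_injective _ hj.injective])
      have hr : Set.range i = Set.range j := by
        have := congrArg (fun s : Finset ℕ => (s : Set ℕ)) heq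
        simpa using this
      exact (StrictMono.range_inj hi hj).1 hr
    subst hij
    have : (Matrix.of fun p q : Fin n => if i p = i q then (1 / 2 : ℝ) else 0)
        = Matrix.diagonal (fun _ => 1 / 2) := by
      ext p q
      simp [Matrix.diagonal_apply, hi.injective.eq_iff]
    rw [this, Matrix.det_diagonal]
    positivity
  · push Not at h
    obtain ⟨p, hp⟩ := h
    rw [Matrix.det_eq_zero_of_row_eq_zero p]
    intro q
    have : i p ≠ j q := fun e => hp ⟨q, e.symm⟩
    simp [this]

lemma tp_b : IsTotallyPositive (fun k => 1 - (1 / 2 : ℝ) ^ (k + 1)) := by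
  have h1 : MatTP (fun r j => if r ≤ j then (1 / 2 : ℝ) ^ (j - r + 1) else 0) := by
    refine matTP_step _ _ (1 / 2) (by norm_num) ?_ ?_ matTP_diag
    · intro r
      by_cases h : r = 0 <;> simp [h]
    · intro r j
      rcases lt_trichotomy r (j + 1) with h | h | h
      · have e : j + 1 - r = j - r + 1 := by omega
        simp [show r ≤ j by omega, h.le, h.ne, e]
        ring
      · subst h; simp
      · simp [show ¬ r ≤ j by omega, show ¬ r ≤ j + 1 by omega, h.ne']
  have h2 : MatTP (fun r j => if r ≤ j then 1 - (1 / 2 : ℝ) ^ (j - r + 1) else 0) := by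
    refine matTP_step _ _ 1 (by norm_num) ?_ ?_ h1
    · intro r
      by_cases h : r = 0
      · simp [h]; norm_num
      · simp [h]
    · intro r j
      rcases lt_trichotomy r (j + 1) with h | h | h
      · have e : j + 1 - r = j - r + 1 := by omega
        simp only [show r ≤ j by omega, h.le, e, if_true]
        ring
      · subst h; simp; norm_num
      · simp [show ¬ r ≤ j by omega, show ¬ r ≤ j + 1 by omega]
  exact h2

lemma not_tp_kb : ¬ IsTotallyPositive (fun k => (k : ℝ) * (1 - (1 / 2 : ℝ) ^ (k + 1))) := by
  intro h
  have h5 := h 5 (fun p => p) (fun p => p + 2) (fun a b h => h)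
    (fun a b h => Nat.add_lt_add_right h 2)
  have e : (Matrix.of fun p q : Fin 5 => if (p : ℕ) ≤ (q : ℕ) + 2 then
      (((q : ℕ) + 2 - (p : ℕ) : ℕ) : ℝ) * (1 - (1 / 2 : ℝ) ^ ((q : ℕ) + 2 - (p : ℕ) + 1)) else 0)
      = !![7/4, 45/16, 31/8, 315/64, 381/64;
           3/4, 7/4, 45/16, 31/8, 315/64;
           0, 3/4, 7/4, 45/16, 31/8;
           0, 0, 3/4, 7/4, 45/16;
           0, 0, 0, 3/4, 7/4] := by
    ext p q
    fin_cases p <;> fin_cases q <;> simp <;> norm_num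
  have h6 := e ▸ h5
  simp [Matrix.det_succ_row_zero, Fin.sum_univ_succ, Fin.succAbove] at h6
  norm_num at h6

/-- the sequence `b_k = 1 - 2^{-(k+1)}` is totally positive, but
`(k·b_k)` is not; hence the multiplier sequence `(k)` is not a TP_∞-preserver. -/
theorem stmt_18 :
    IsTotallyPositive (fun k => 1 - (1 / 2 : ℝ) ^ (k + 1)) ∧
    ¬ IsTotallyPositive (fun k => (k : ℝ) * (1 - (1 / 2 : ℝ) ^ (k + 1))) ∧
    ¬ IsTPPreserver (fun k => (k : ℝ)) := by
  exact ⟨tp_b, not_tp_kb, fun h => not_tp_kb (h _ tp_b)⟩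
end
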